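/- Let n ≥ 4 be a natural number. The genus-zero Hurwitz number h_{3^1} with one degenerate branch point of reduced ramification type 3^1 (i.e., one permutation of cycle type (4,1^{n-4})) and m = 2n−5 simple branch points satisfies h_{3^1} = (32/3)·((2n−5)!/(n−4)!)·n^{n−6}. -/

import Mathlib

open Equiv

namespace Hur
open PowerSeries

/-- Coefficients of a substitution by a multiple of `X`. -/
lemma coeff_subst_X_mul {R : Type*} [CommRing R] (u f : R⟦X⟧) (n : ℕ) :
    coeff n (f.subst (X * u)) = ∑ j ∈ Finset.range (n + 1), coeff j f * coeff n ((X * u) ^ j) := by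
  have ha : HasSubst (X * u) := HasSubst.of_constantCoeff_zero' (by simp)
  rw [coeff_subst' ha]
  rw [finsum_eq_sum_of_support_subset (s := Finset.range (n + 1))]
  · simp [smul_eq_mul]
  · intro j hj
    simp only [Function.mem_support, smul_eq_mul] at hj
    simp only [Finset.coe_range, Set.mem_Iio]
    by_contra hlt
    apply hj
    rw [mul_pow, coeff_X_pow_mul', if_neg (by omega), mul_zero]

/-- Substitution `X ↦ X * u` as a ring homomorphism. -/
noncomputable def sb {R : Type*} [CommRing R] (u : R⟦X⟧) : R⟦X⟧ →+* R⟦X⟧ :=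
  (substAlgHom (R := R) (HasSubst.of_constantCoeff_zero' (by simp) : HasSubst (X * u))).toRingHom

lemma sb_apply {R : Type*} [CommRing R] (u f : R⟦X⟧) : sb u f = f.subst (X * u) := by
  rw [← coe_substAlgHom (HasSubst.of_constantCoeff_zero' (by simp) : HasSubst (X * u))]; rfl

lemma sb_X {R : Type*} [CommRing R] (u : R⟦X⟧) : sb u X = X * u :=
  substAlgHom_X _

lemma sb_C {R : Type*} [CommRing R] (u : R⟦X⟧) (r : R) : sb u (C r) = C r := by
  rw [sb_apply]; exact subst_C r

/-- The series `exp (-X)`. -/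
noncomputable def en (R : Type*) [CommRing R] [Algebra ℚ R] : R⟦X⟧ := evalNegHom (exp R)

lemma exp_mul_en (R : Type*) [CommRing R] [Algebra ℚ R] : exp R * en R = 1 :=
  exp_mul_exp_neg_eq_one

lemma en_pow (R : Type*) [CommRing R] [Algebra ℚ R] (j : ℕ) :
    en R ^ j = rescale (-(j : R)) (exp R) := by
  rw [en, ← map_pow, exp_pow_eq_rescale_exp, evalNegHom, rescale_rescale]
  simp

lemma coeff_en_pow (R : Type*) [CommRing R] [Algebra ℚ R] (j n : ℕ) :
    coeff n (en R ^ j) = algebraMap ℚ R ((-(j : ℚ)) ^ n / n.factorial) := by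
  rw [en_pow, coeff_rescale, coeff_exp]
  simp [div_eq_mul_inv]

lemma coeff_Xen_pow (R : Type*) [CommRing R] [Algebra ℚ R] (j n : ℕ) :
    coeff n ((X * en R) ^ j) =
      if j ≤ n then algebraMap ℚ R ((-(j : ℚ)) ^ (n - j) / (n - j).factorial) else 0 := by
  rw [mul_pow, coeff_X_pow_mul', coeff_en_pow]

/-- finite differences -/
lemma fd (N j : ℕ) (h : j < N) (c : ℚ) :
    ∑ k ∈ Finset.range (N + 1), (-1 : ℚ) ^ (N - k) * (N.choose k) * (c + k) ^ j = 0 := by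
  have h1 := congrFun (fwdDiff_iter_pow_eq_zero_of_lt (R := ℚ) h) c
  rw [fwdDiff_iter_eq_sum_shift] at h1
  simpa [zsmul_eq_mul] using h1

/-- inner substitution -/
noncomputable def sI : ℚ⟦X⟧ →+* ℚ⟦X⟧ := sb (en ℚ)

lemma coeff_sI (f : ℚ⟦X⟧) (n : ℕ) : coeff n (sI f) =
    ∑ j ∈ Finset.range (n + 1), coeff j f * ((-(j : ℚ)) ^ (n - j) / (n - j).factorial) := by
  rw [sI, sb_apply, coeff_subst_X_mul]
  apply Finset.sum_congr rfl
  intro j hj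
  rw [coeff_Xen_pow, if_pos (by simp at hj; omega)]; rfl

lemma sI_X : sI X = X * en ℚ := sb_X _

/-- image of `z` -/
noncomputable def Zv : ℚ⟦X⟧⟦X⟧ := X * (en ℚ⟦X⟧ * C (en ℚ))

/-- The change of variables `y = T e^{-T}`, `z = Y e^{-Y-T}`. -/
noncomputable def Phi : ℚ⟦X⟧⟦X⟧ →+* ℚ⟦X⟧⟦X⟧ :=
  (sb (en ℚ⟦X⟧ * C (en ℚ))).comp (PowerSeries.map sI)

lemma coeff_Phi (f : ℚ⟦X⟧⟦X⟧) (n : ℕ) : coeff n (Phi f) =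
    ∑ j ∈ Finset.range (n + 1), sI (coeff j f) * en ℚ ^ j *
      C ((-(j : ℚ)) ^ (n - j) / (n - j).factorial) := by
  rw [Phi, RingHom.comp_apply, sb_apply, coeff_subst_X_mul]
  apply Finset.sum_congr rfl
  intro j hj
  have : (X * (en ℚ⟦X⟧ * C (en ℚ)))^j = C (en ℚ ^ j) * (X * en ℚ⟦X⟧) ^ j := by
    rw [map_pow]; ring
  rw [this, coeff_C_mul, coeff_Xen_pow, if_pos (by simp at hj; omega), coeff_map, mul_assoc]
  congr 1

lemma Phi_X : Phi X = Zv := by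
  rw [Phi, RingHom.comp_apply, PowerSeries.map_X, sb_X, Zv]

lemma Phi_C (f : ℚ⟦X⟧) : Phi (C f) = C (sI f) := by
  rw [Phi, RingHom.comp_apply, PowerSeries.map_C, sb_C]

end Hur

namespace Hur
open PowerSeries

/-- closed form of the normalised Hurwitz numbers -/
noncomputable def nuH (l E : ℕ) : ℚ :=
  (l : ℚ) ^ (l + 1) / l.factorial * ((l : ℚ) + E) ^ ((E : ℤ) - 2) / E.factorial

lemma nuH_zero (E : ℕ) : nuH 0 E = 0 := by simp [nuH]

/-- generating series of `nuH` -/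
noncomputable def Vs : ℚ⟦X⟧⟦X⟧ := PowerSeries.mk fun l => PowerSeries.mk fun E => nuH l E

lemma coeff_sI_mul (f : ℚ⟦X⟧) (l n : ℕ) : coeff n (sI f * en ℚ ^ l) =
    ∑ j ∈ Finset.range (n + 1), coeff j f * ((-((l : ℚ) + j)) ^ (n - j) / (n - j).factorial) := by
  have h1 : sI f = (X * en ℚ) ^ (n + 1) * sI (PowerSeries.mk fun i => coeff (i + (n + 1)) f) +
      ∑ j ∈ Finset.range (n + 1), C (coeff j f) * (X * en ℚ) ^ j := by
    have h0 : f = X ^ (n + 1) * (PowerSeries.mk fun i => coeff (i + (n + 1)) f) +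
        ∑ j ∈ Finset.range (n + 1), C (coeff j f) * X ^ j := by
      ext i
      rw [map_add, coeff_X_pow_mul', map_sum]
      simp only [coeff_C_mul, coeff_X_pow, coeff_mk, mul_ite, mul_one, mul_zero,
        Finset.sum_ite_eq, Finset.mem_range]
      split_ifs with h1 h2 h2
      · omega
      · rw [Nat.sub_add_cancel h1, add_zero]
      · rw [zero_add]
      · omega
    conv_lhs => rw [h0]
    rw [map_add, map_mul, map_pow, sI_X, map_sum]
    congr 1
    apply Finset.sum_congr rfl
    intro j _
    rw [map_mul, map_pow, sI_X]
    congr 1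
    exact sb_C _ _
  rw [h1, add_mul, map_add, mul_pow, mul_assoc, mul_assoc, coeff_X_pow_mul', if_neg (by omega),
    zero_add, Finset.sum_mul, map_sum]
  apply Finset.sum_congr rfl
  intro j hj
  have : C (coeff j f) * (X * en ℚ) ^ j * en ℚ ^ l = C (coeff j f) * (X ^ j * en ℚ ^ (l + j)) := by
    ring
  rw [this, coeff_C_mul, coeff_X_pow_mul', if_pos (by simp at hj; omega), coeff_en_pow]
  simp

lemma fact_div (N k : ℕ) (h : k ≤ N) : (1 : ℚ) / (k.factorial * (N - k).factorial) =
    N.choose k / N.factorial := by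
  rw [Nat.cast_choose ℚ h]
  have := Nat.factorial_ne_zero N
  field_simp

lemma sI_V0 (l : ℕ) (hl : 1 ≤ l) : coeff 0 (sI (coeff l Vs) * en ℚ ^ l) =
    (l : ℚ) ^ (l - 1) / l.factorial := by
  obtain ⟨l, rfl⟩ : ∃ k, l = k + 1 := ⟨l - 1, by omega⟩
  rw [coeff_sI_mul]
  simp only [zero_add, Finset.range_one, Finset.sum_singleton, Vs, coeff_mk, nuH]
  have : ((l + 1 : ℕ) : ℚ) ≠ 0 := by positivity
  simp
  push_cast at this
  field_simp
  ring

lemma sI_V1 (l : ℕ) (hl : 1 ≤ l) : coeff 1 (sI (coeff l Vs) * en ℚ ^ l) =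
    - (l : ℚ) ^ l / ((l + 1) * l.factorial) := by
  obtain ⟨l, rfl⟩ : ∃ k, l = k + 1 := ⟨l - 1, by omega⟩
  rw [coeff_sI_mul]
  simp only [Finset.sum_range_succ, Finset.range_one, Finset.sum_singleton, Vs, coeff_mk, nuH]
  have h1 : ((l + 1 : ℕ) : ℚ) ≠ 0 := by positivity
  have h2 : ((l + 1 : ℕ) : ℚ) + 1 ≠ 0 := by positivity
  simp
  push_cast at h1 h2
  field_simp
  ring

lemma sI_V2 (l b : ℕ) (hl : 1 ≤ l) (hb : 2 ≤ b) : coeff b (sI (coeff l Vs) * en ℚ ^ l) = 0 := by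
  rw [coeff_sI_mul]
  have h := fd b (b - 2) (by omega) l
  have h2 : ∀ j ∈ Finset.range (b + 1),
      coeff j (coeff l Vs) * ((-((l : ℚ) + j)) ^ (b - j) / (b - j).factorial) =
      (l : ℚ) ^ (l + 1) / l.factorial / b.factorial *
        ((-1 : ℚ) ^ (b - j) * (b.choose j) * (l + j) ^ (b - 2)) := by
    intro j hj
    have hj' : j ≤ b := by simp at hj; omega
    have h3 : ((l : ℚ) + j) ≠ 0 := by positivity
    have h4 : ((l : ℚ) + j) ^ ((j : ℤ) - 2) * ((l : ℚ) + j) ^ (b - j) = ((l : ℚ) + j) ^ (b - 2) := by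
      rw [← zpow_natCast, ← zpow_natCast, ← zpow_add₀ h3]
      congr 1
      omega
    have h5 := fact_div b j hj'
    simp only [Vs, coeff_mk, nuH]
    rw [neg_pow, ← h4]
    have : ∀ A B D u v w : ℚ, A * B / u * (D * v / w) = A * (D * (1 / (u * w)) * (B * v)) := by
      intros; ring
    rw [this, h5]; ring
  rw [Finset.sum_congr rfl h2, ← Finset.mul_sum, h, mul_zero]

lemma Vs_zero : coeff 0 Vs = 0 := by
  ext E; simp [Vs, nuH_zero]

lemma coeff_PhiV (a b : ℕ) : coeff b (coeff a (Phi Vs)) = ∑ l ∈ Finset.range (a + 1),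
    coeff b (sI (coeff l Vs) * en ℚ ^ l) * ((-(l : ℚ)) ^ (a - l) / (a - l).factorial) := by
  rw [coeff_Phi, map_sum]
  apply Finset.sum_congr rfl
  intro l _
  rw [coeff_mul_C]

lemma PhiV0 (a : ℕ) : coeff 0 (coeff a (Phi Vs)) = if a = 1 then 1 else 0 := by
  rw [coeff_PhiV]
  rcases a with _ | _ | a
  · simp [Vs_zero]
  · simp [Finset.sum_range_succ, Vs_zero, sI_V0]
    have := sI_V0 1 le_rfl
    simpa using this
  · have h := fd (a + 2) (a + 1) (by omega) 0
    have h2 : ∀ l ∈ Finset.range (a + 2 + 1),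
      coeff 0 (sI (coeff l Vs) * en ℚ ^ l) * ((-(l : ℚ)) ^ (a + 2 - l) / (a + 2 - l).factorial) =
      1 / (a + 2).factorial * ((-1 : ℚ) ^ (a + 2 - l) * ((a + 2).choose l) * (0 + l) ^ (a + 1)) := by
      intro l hl
      have hl' : l ≤ a + 2 := by simp at hl; omega
      rcases Nat.eq_zero_or_pos l with rfl | hp
      · simp [Vs_zero]
      · rw [sI_V0 l hp]
        have h5 := fact_div (a + 2) l hl'
        rw [neg_pow, zero_add, show a + 1 = (l - 1) + (a + 2 - l) by omega, pow_add]
        have : ∀ A B D u w : ℚ, A / u * (D * B / w) = D * (1 / (u * w)) * (A * B) := by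
          intros; ring
        rw [this, h5]; ring
    rw [Finset.sum_congr rfl h2, ← Finset.mul_sum, h, mul_zero]
    simp

lemma PhiV1 (a : ℕ) (ha : 1 ≤ a) : coeff 1 (coeff a (Phi Vs)) = - 1 / (a + 1).factorial := by
  rw [coeff_PhiV]
  have h := fd (a + 1) a (by omega) (-1)
  rw [Finset.sum_range_succ'] at h
  have h2 : ∀ l ∈ Finset.range (a + 1),
      coeff 1 (sI (coeff l Vs) * en ℚ ^ l) * ((-(l : ℚ)) ^ (a - l) / (a - l).factorial) =
      - (1 / (a + 1).factorial) * ((-1 : ℚ) ^ (a + 1 - (l + 1)) * ((a + 1).choose (l + 1)) *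
        (-1 + ((l + 1 : ℕ) : ℚ)) ^ a) := by
    intro l hl
    have hl' : l ≤ a := by simp at hl; omega
    rcases Nat.eq_zero_or_pos l with rfl | hp
    · simp [Vs_zero]; right; omega
    · rw [sI_V1 l hp]
      have h5 := fact_div (a + 1) (l + 1) (by omega)
      rw [show a + 1 - (l + 1) = a - l by omega, Nat.factorial_succ l] at h5
      push_cast at h5
      rw [neg_pow, show a + 1 - (l + 1) = a - l by omega,
        show (-1 + ((l + 1 : ℕ) : ℚ)) = l by push_cast; ring]
      have h6 : (l : ℚ) ^ a = (l : ℚ) ^ l * (l : ℚ) ^ (a - l) := by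
        rw [← pow_add]; congr 1; omega
      rw [h6]
      have : ∀ A B D u w : ℚ, -A / u * (D * B / w) = -(D * (1 / (u * w)) * (A * B)) := by
        intros; ring
      rw [this, h5]; ring
  rw [Finset.sum_congr rfl h2, ← Finset.mul_sum, eq_neg_of_add_eq_zero_left h]
  simp
  rw [pow_succ]
  have : ((-1 : ℚ) ^ a) * (-1) ^ a = 1 := by rw [← mul_pow]; simp
  field_simp
  linear_combination -this

lemma PhiV2 (a b : ℕ) (hb : 2 ≤ b) : coeff b (coeff a (Phi Vs)) = 0 := by
  rw [coeff_PhiV]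
  apply Finset.sum_eq_zero
  intro l _
  rcases Nat.eq_zero_or_pos l with rfl | hp
  · simp [Vs_zero]
  · rw [sI_V2 l b hp hb, zero_mul]

lemma PhiVz : coeff 0 (Phi Vs) = 0 := by
  rw [coeff_Phi]; simp [Vs_zero]

lemma Phi_V : X * Phi Vs + C X * exp ℚ⟦X⟧ = X ^ 2 + C X * X + C X := by
  ext a b
  rcases a with _ | _ | a
  · simp [coeff_X, coeff_X_pow]
  · rw [map_add, zero_add, coeff_succ_X_mul _ (Phi Vs), PhiVz]
    simp [coeff_X, coeff_C, coeff_X_pow]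
  · rw [map_add, coeff_succ_X_mul _ (Phi Vs), coeff_C_mul, coeff_exp]
    have h1 : (coeff (a + 1 + 1)) (X ^ 2 + C X * X + C X : ℚ⟦X⟧⟦X⟧) = if a = 0 then 1 else 0 := by
      simp [coeff_X, coeff_C, coeff_X_pow]
    rw [h1, map_add]
    have h2 : X * (algebraMap ℚ ℚ⟦X⟧) (1 / ↑(a + 1 + 1).factorial) =
      C (1 / ((a + 1 + 1).factorial : ℚ)) * X := by rw [mul_comm]; rfl
    rw [h2, coeff_C_mul, coeff_X]
    rcases b with _ | _ | b
    · rw [PhiV0]; simp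
    · rw [zero_add, PhiV1 _ (by omega), if_pos rfl]
      split_ifs
      · simp [coeff_one]; ring
      · simp; ring
    · rw [PhiV2 _ _ (by omega), if_neg (by omega)]; split_ifs <;> simp [coeff_one]

end Hur

namespace Hur
open PowerSeries

/-- The generating series for words starting with `k` star transpositions. -/
noncomputable def Wk : ℕ → ℚ⟦X⟧⟦X⟧
  | 0 => X
  | (k + 1) => Vs * Wk k +
      PowerSeries.mk fun l => if l = 0 then 0 else X * coeff (l + 1) (Wk k)

/-- Normalised numbers of words starting with `k` star transpositions. -/
noncomputable def gam (l E k : ℕ) : ℚ := coeff E (coeff l (Wk k))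

lemma Wk_zero' (k : ℕ) : coeff 0 (Wk k) = 0 := by
  cases k with
  | zero => simp [Wk]
  | succ k => 
    rw [Wk, map_add, coeff_mk, if_pos rfl, coeff_zero_mul, Vs_zero]; simp
where
  coeff_zero_mul {R : Type} [CommRing R] (f g : R⟦X⟧) : coeff 0 (f * g) = coeff 0 f * coeff 0 g := by
    simp

lemma gam_zero_left (E k : ℕ) : gam 0 E k = 0 := by simp [gam, Wk_zero']

lemma gam_zero (l E : ℕ) : gam l E 0 = if l = 1 ∧ E = 0 then 1 else 0 := by
  rw [gam, Wk, coeff_X]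
  split_ifs with h1 h2 h2
  · rw [h2.2]; simp
  · rw [coeff_one, if_neg]; tauto
  · tauto
  · simp

lemma gam_succ (l E k : ℕ) : gam (l + 1) E (k + 1) =
    (∑ i ∈ Finset.HasAntidiagonal.antidiagonal (l + 1), ∑ j ∈ Finset.HasAntidiagonal.antidiagonal E,
      nuH i.1 j.1 * gam i.2 j.2 k) + (if E = 0 then 0 else gam (l + 2) (E - 1) k) := by
  rw [gam, Wk, map_add, map_add, coeff_mk, if_neg (by omega), coeff_mul, map_sum]
  congr 1
  · apply Finset.sum_congr rfl
    intro i _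
    rw [coeff_mul]
    apply Finset.sum_congr rfl
    intro j _
    simp [Vs, gam]
  · cases E with
    | zero => simp
    | succ E => rw [coeff_succ_X_mul]; simp [gam]

lemma gam_vanish (k : ℕ) : ∀ l E, l + 2 * E ≤ k → gam l E k = 0 := by
  induction k with
  | zero =>
    intro l E h
    rw [gam_zero, if_neg]; omega
  | succ k ih =>
    intro l E h
    rcases l with _ | l
    · exact gam_zero_left _ _
    rw [gam_succ]
    rw [Finset.sum_eq_zero, zero_add]
    · split_ifs
      · rfl
      · apply ih; omega
    · intro i hi
      apply Finset.sum_eq_zero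
      intro j hj
      rw [Finset.HasAntidiagonal.mem_antidiagonal] at hi hj
      rcases Nat.eq_zero_or_pos i.1 with h0 | h0
      · rw [h0, nuH_zero, zero_mul]
      · rw [ih, mul_zero]; omega

lemma Wk_rec (k : ℕ) : X * Wk (k + 1) = X * Vs * Wk k +
    C X * (Wk k - C (coeff 1 (Wk k)) * X) := by
  ext1 l
  rcases l with _ | l
  · rw [map_add, coeff_C_mul, map_sub, Wk_zero']
    simp
  · rw [mul_assoc, map_add, coeff_succ_X_mul, coeff_succ_X_mul, Wk, map_add, coeff_mk, coeff_C_mul,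
      map_sub, coeff_C_mul, coeff_X]
    congr 1
    split_ifs with h1 h2 h2
    · subst h1; simp
    · omega
    · omega
    · simp

lemma PhiW_rec (k : ℕ) : ∃ d : ℚ⟦X⟧, X * Phi (Wk (k + 1)) =
    (X ^ 2 + C X * X + C X) * Phi (Wk k) - C d * X := by
  have h := congrArg Phi (Wk_rec k)
  simp only [map_add, map_mul, map_sub, Phi_X, Phi_C, sI_X] at h
  rw [Zv] at h
  refine ⟨X * en ℚ * sI (coeff 1 (Wk k)), ?_⟩
  have h1 := exp_mul_en ℚ⟦X⟧
  have h2 : (C (exp ℚ) * C (en ℚ) : ℚ⟦X⟧⟦X⟧) = 1 := by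
    rw [← map_mul, exp_mul_en, map_one]
  rw [← Phi_V]
  simp only [map_mul]
  have h3 := congrArg (fun t => exp ℚ⟦X⟧ * C (exp ℚ) * t) h
  generalize exp ℚ⟦X⟧ = a at *
  generalize en ℚ⟦X⟧ = a' at *
  generalize (C (exp ℚ) : ℚ⟦X⟧⟦X⟧) = b at *
  generalize (C (en ℚ) : ℚ⟦X⟧⟦X⟧) = b' at *
  have h4 : a * a' * (b * b') = 1 := by rw [h1, h2, one_mul]
  generalize Phi (Wk (k + 1)) = w1 at *
  generalize Phi (Wk k) = w at *
  generalize Phi Vs = v at *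
  generalize (C (sI (coeff 1 (Wk k))) : ℚ⟦X⟧⟦X⟧) = c at *
  generalize (C X : ℚ⟦X⟧⟦X⟧) = y at *
  linear_combination h3 - X * w1 * h4 + X * v * w * h4 + y * a * w * h2 - y * b' * c * X * h4

lemma PhiW_zero (k : ℕ) : coeff 0 (Phi (Wk k)) = 0 := by
  rw [coeff_Phi]; simp [Wk_zero']

lemma PhiW_succ (k a : ℕ) : coeff (a + 1) (Phi (Wk (k + 1))) =
    coeff a (Phi (Wk k)) + X * coeff (a + 1) (Phi (Wk k)) + X * coeff (a + 2) (Phi (Wk k)) := by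
  obtain ⟨d, hd⟩ := PhiW_rec k
  have h := congrArg (coeff (a + 2)) hd
  have e : (X ^ 2 + C X * X + C X) * Phi (Wk k) - C d * X =
    X * (X * Phi (Wk k)) + C X * (X * Phi (Wk k)) + C X * Phi (Wk k) - C d * X := by ring
  rw [e, coeff_succ_X_mul, map_sub, map_add, map_add, coeff_succ_X_mul, coeff_succ_X_mul,
    coeff_C_mul, coeff_C_mul, coeff_succ_X_mul, coeff_C_mul, coeff_X,
    if_neg (by omega), mul_zero, sub_zero] at h
  exact h

lemma PhiW_base (a b : ℕ) : coeff b (coeff (a + 1) (Phi (Wk 0))) =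
    (-1) ^ a / a.factorial * ((-1) ^ b / b.factorial) := by
  rw [Wk, Phi_X, Zv, coeff_succ_X_mul, mul_comm, coeff_C_mul]
  have h1 := coeff_en_pow ℚ⟦X⟧ 1 a
  have h2 := coeff_en_pow ℚ 1 b
  rw [pow_one] at h1 h2
  rw [h1, mul_comm]
  have : (algebraMap ℚ ℚ⟦X⟧) ((-((1 : ℕ) : ℚ)) ^ a / a.factorial) =
    C ((-((1 : ℕ) : ℚ)) ^ a / a.factorial) := rfl
  rw [this, coeff_C_mul, h2]
  simp

/-! explicit polynomials -/

/-- divided powers of `τ - 1` -/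
noncomputable def dP (i : ℕ) : Polynomial ℚ :=
  Polynomial.C (1 / (i.factorial : ℚ)) * (Polynomial.X - 1) ^ i
/-- divided powers of `τ` -/
noncomputable def dS (i : ℕ) : Polynomial ℚ :=
  Polynomial.C (1 / (i.factorial : ℚ)) * Polynomial.X ^ i
/-- shifted divided powers of `τ - 1` -/
noncomputable def dQ : ℕ → Polynomial ℚ
  | 0 => 0
  | (i + 1) => dP i

lemma der_dP (i : ℕ) : Polynomial.derivative (dP i) = dQ i := by
  cases i with
  | zero => simp [dP, dQ]
  | succ i =>
    rw [dQ, dP, dP, Polynomial.derivative_C_mul, Polynomial.derivative_pow]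
    simp only [Polynomial.derivative_sub, Polynomial.derivative_X, Polynomial.derivative_one,
      sub_zero, mul_one, Nat.add_sub_cancel]
    rw [← mul_assoc, ← Polynomial.C_mul, Nat.factorial_succ]
    congr 2
    push_cast
    have : (i.factorial : ℚ) ≠ 0 := by positivity
    field_simp

lemma der_dQ_succ (i : ℕ) : Polynomial.derivative (dQ (i + 1)) = dQ i := der_dP i
lemma der_dQ_zero : Polynomial.derivative (dQ 0) = 0 := by simp [dQ]

lemma der_dS_zero : Polynomial.derivative (dS 0) = 0 := by simp [dS]

lemma der_dS_succ (i : ℕ) : Polynomial.derivative (dS (i + 1)) = dS i := by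
    rw [dS, dS, Polynomial.derivative_C_mul, Polynomial.derivative_pow]
    simp only [Polynomial.derivative_X, mul_one, Nat.add_sub_cancel]
    rw [← mul_assoc, ← Polynomial.C_mul, Nat.factorial_succ]
    congr 2
    push_cast
    have : (i.factorial : ℚ) ≠ 0 := by positivity
    field_simp

/-- the reduced polynomials -/
noncomputable def ut (a b : ℕ) : Polynomial ℚ := dQ (a + b) * dS b - dS (a + b) * dQ b

lemma ut_zero (b : ℕ) : ut 0 b = 0 := by simp [ut, mul_comm]

lemma der_ut_zero (a : ℕ) : Polynomial.derivative (ut (a + 1) 0) = ut a 0 := by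
  simp only [ut, add_zero, Polynomial.derivative_sub, Polynomial.derivative_mul, der_dQ_succ,
    der_dS_zero, der_dQ_zero, der_dS_succ, mul_zero]

lemma der_ut_succ (a b : ℕ) : Polynomial.derivative (ut (a + 1) (b + 1)) =
    ut a (b + 1) + ut (a + 2) b := by
  simp only [ut, show a + 1 + (b + 1) = (a + b + 1) + 1 by ring,
    show a + (b + 1) = a + b + 1 by ring, show a + 2 + b = a + b + 1 + 1 by ring,
    Polynomial.derivative_sub, Polynomial.derivative_mul, der_dQ_succ, der_dS_succ]
  ring

/-- the full polynomials -/
noncomputable def uu (a b : ℕ) : Polynomial ℚ :=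
  ∑ i ∈ Finset.HasAntidiagonal.antidiagonal b, dP i.1 * ut a i.2

lemma uu_zero (b : ℕ) : uu 0 b = 0 := by simp [uu, ut_zero]

lemma der_uu_zero (a : ℕ) : Polynomial.derivative (uu (a + 1) 0) = uu a 0 := by
  simp [uu, der_ut_zero, der_dP, dQ]

lemma der_uu_succ (a b : ℕ) : Polynomial.derivative (uu (a + 1) (b + 1)) =
    uu a (b + 1) + uu (a + 1) b + uu (a + 2) b := by
  have h1 : Polynomial.derivative (uu (a + 1) (b + 1)) =
    ∑ i ∈ Finset.HasAntidiagonal.antidiagonal (b + 1), dQ i.1 * ut (a + 1) i.2 +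
    ∑ i ∈ Finset.HasAntidiagonal.antidiagonal (b + 1), dP i.1 * Polynomial.derivative (ut (a + 1) i.2) := by
    rw [uu, Polynomial.derivative_sum, ← Finset.sum_add_distrib]
    apply Finset.sum_congr rfl
    intro i _
    rw [Polynomial.derivative_mul, der_dP]
  rw [h1, Finset.Nat.sum_antidiagonal_succ]
  rw [Finset.Nat.sum_antidiagonal_succ']
  simp only [der_ut_succ, der_ut_zero, dQ, zero_mul, zero_add, mul_add, Finset.sum_add_distrib]
  have h2 : uu a (b + 1) = dP (b + 1) * ut a 0 +
    ∑ i ∈ Finset.HasAntidiagonal.antidiagonal b, dP i.1 * ut a (i.2 + 1) := by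
    rw [uu, Finset.Nat.sum_antidiagonal_succ']
  rw [h2, uu, uu]
  ring

lemma PhiW_eq (k : ℕ) : ∀ a b, coeff b (coeff a (Phi (Wk k))) = k.factorial * (uu a b).coeff k := by
  induction k with
  | zero =>
    intro a b
    rcases a with _ | a
    · rw [PhiW_zero, uu_zero]; simp
    rw [PhiW_base, Polynomial.coeff_zero_eq_eval_zero, uu, Polynomial.eval_finsetSum,
      Finset.sum_eq_single (b, 0)]
    · simp [ut, dP, dQ, dS]; ring
    · rintro ⟨i, j⟩ hi hne
      rcases j with _ | j
      · simp at hi; simp [hi] at hne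
      · simp [ut, dP, dQ, dS]
    · intro h; simp at h
  | succ k ih =>
    intro a b
    rcases a with _ | a
    · rw [PhiW_zero, uu_zero]; simp
    rw [PhiW_succ]
    have h := Polynomial.coeff_derivative (uu (a + 1) b) k
    rw [Nat.factorial_succ]
    push_cast
    rcases b with _ | b
    · rw [der_uu_zero] at h
      simp only [map_add, ih, coeff_zero_X_mul, h]; ring
    · rw [der_uu_succ] at h
      simp only [map_add, ih, coeff_succ_X_mul]
      rw [Polynomial.coeff_add, Polynomial.coeff_add] at h
      linear_combination (k.factorial : ℚ) * h

lemma eval_dP (i : ℕ) : (dP i).eval 1 = if i = 0 then 1 else 0 := by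
  cases i <;> simp [dP]

lemma eval_dQ (i : ℕ) : (dQ i).eval 1 = if i = 1 then 1 else 0 := by
  cases i <;> simp [dQ, eval_dP]

lemma eval_uu (a b : ℕ) : (uu a b).eval 1 = coeff b (coeff a (Phi Vs)) := by
  rcases a with _ | a
  · rw [uu_zero, PhiVz]; simp
  have h : (uu (a + 1) b).eval 1 = (ut (a + 1) b).eval 1 := by
    rw [uu, Polynomial.eval_finsetSum, Finset.sum_eq_single (0, b)]
    · simp [eval_dP]
    · rintro ⟨i, j⟩ hi hne
      rcases i with _ | i
      · simp at hi; simp [hi] at hne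
      · simp [eval_dP]
    · intro h; simp at h
  rw [h, ut]
  simp only [Polynomial.eval_sub, Polynomial.eval_mul, eval_dQ, dS]
  rcases b with _ | _ | b
  · rw [PhiV0]; simp
  · rw [zero_add, PhiV1 _ (by omega)]; simp; ring
  · rw [PhiV2 _ _ (by omega)]; simp; omega

/-- the triangular coefficients of `Phi` -/
noncomputable def cP (a b l j : ℕ) : ℚ := ((-((l : ℚ) + j)) ^ (b - j) / (b - j).factorial) *
  ((-(l : ℚ)) ^ (a - l) / (a - l).factorial)

lemma coeff_coeff_Phi (f : ℚ⟦X⟧⟦X⟧) (a b : ℕ) : coeff b (coeff a (Phi f)) =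
    ∑ l ∈ Finset.range (a + 1), ∑ j ∈ Finset.range (b + 1), coeff j (coeff l f) * cP a b l j := by
  rw [coeff_Phi, map_sum]
  apply Finset.sum_congr rfl
  intro l _
  rw [coeff_mul_C, coeff_sI_mul, Finset.sum_mul]
  apply Finset.sum_congr rfl
  intro j _
  rw [cP]; ring

lemma Phi_inj (f : ℚ⟦X⟧⟦X⟧) (h : Phi f = 0) : f = 0 := by
  have key : ∀ N a b, a + b = N → coeff b (coeff a f) = 0 := by
    intro N
    induction N using Nat.strong_induction_on with
    | _ N ih =>
      intro a b hab
      have h1 := coeff_coeff_Phi f a b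
      rw [h, map_zero, map_zero, Finset.sum_eq_single a, Finset.sum_eq_single b] at h1
      · simpa [cP] using h1.symm
      · intro j hj hne
        rw [Finset.mem_range] at hj
        rw [ih (a + j) (by omega) a j rfl, zero_mul]
      · simp
      · intro l hl hne
        apply Finset.sum_eq_zero
        intro j hj
        rw [Finset.mem_range] at hj hl
        rw [ih (l + j) (by omega) l j rfl, zero_mul]
      · simp
  ext a b
  simpa using key _ a b rfl

/-- summed series -/
noncomputable def Ss : ℚ⟦X⟧⟦X⟧ := PowerSeries.mk fun l => PowerSeries.mk fun E =>
  ∑ k ∈ Finset.range (l + 2 * E), gam l E k / k.factorial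

lemma sum_gam_ext (l E K : ℕ) (h : l + 2 * E ≤ K) :
    ∑ k ∈ Finset.range (l + 2 * E), gam l E k / k.factorial =
    ∑ k ∈ Finset.range K, gam l E k / k.factorial := by
  apply Finset.sum_subset
  · intro x; simp; omega
  · intro k _ hk
    rw [gam_vanish k l E (by simpa using hk), zero_div]

lemma Phi_Ss : Phi Ss = Phi Vs := by
  ext a b
  obtain ⟨K, hK1, hK2⟩ : ∃ K, a + 2 * b ≤ K ∧ (uu a b).natDegree < K :=
    ⟨a + 2 * b + (uu a b).natDegree + 1, by omega, by omega⟩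
  rw [← eval_uu, Polynomial.eval_eq_sum_range' hK2, coeff_coeff_Phi]
  have : ∀ k ∈ Finset.range K, (uu a b).coeff k * 1 ^ k = 
      ∑ l ∈ Finset.range (a + 1), ∑ j ∈ Finset.range (b + 1),
        gam l j k / k.factorial * cP a b l j := by
    intro k _
    have h := PhiW_eq k a b
    rw [coeff_coeff_Phi] at h
    have hk : (k.factorial : ℚ) ≠ 0 := by positivity
    rw [one_pow, mul_one]
    apply mul_left_cancel₀ hk
    rw [← h, Finset.mul_sum]
    apply Finset.sum_congr rfl
    intro l _
    rw [Finset.mul_sum]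
    apply Finset.sum_congr rfl
    intro j _
    rw [gam]; field_simp
  rw [Finset.sum_congr rfl this]
  symm
  rw [Finset.sum_comm]
  apply Finset.sum_congr rfl
  intro l hl
  rw [Finset.sum_comm]
  apply Finset.sum_congr rfl
  intro j hj
  rw [Finset.mem_range] at hl hj
  rw [Ss, coeff_mk, coeff_mk, sum_gam_ext l j K (by omega), Finset.sum_mul]

theorem sum_gam (l E : ℕ) : ∑ k ∈ Finset.range (l + 2 * E), gam l E k / k.factorial = nuH l E := by
  have h : Ss - Vs = 0 := Phi_inj _ (by rw [map_sub, Phi_Ss, sub_self])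
  have h1 := congrArg (fun f => coeff E (coeff l f)) (sub_eq_zero.1 h)
  simpa [Ss, Vs] using h1

end Hur

namespace Hur

section parts
variable {α : Type*}

/-- the finest equivalence relation linking `x` and `y` -/
def lk (x y : α) : Setoid α := sInf {P | P x y}

lemma lk_le {x y : α} {P : Setoid α} : lk x y ≤ P ↔ P x y := by
  constructor
  · intro h
    apply h
    rw [lk, Setoid.sInf_iff]
    intro Q hQ; exact hQ
  · intro h; exact sInf_le h

lemma lk_rel (x y : α) : lk x y x y := lk_le.1 le_rfl

lemma lk_comm (x y : α) : lk x y = lk y x :=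
  le_antisymm (lk_le.2 ((lk y x).symm' (lk_rel y x))) (lk_le.2 ((lk x y).symm' (lk_rel x y)))

/-- the orbit relation of a permutation -/
def orb (σ : Perm α) : Setoid α := sInf {P | ∀ u, P u (σ u)}

lemma orb_le {σ : Perm α} {P : Setoid α} : orb σ ≤ P ↔ ∀ u, P u (σ u) := by
  constructor
  · intro h u
    apply h
    rw [orb, Setoid.sInf_iff]
    intro Q hQ; exact hQ u
  · intro h; exact sInf_le h

lemma orb_rel (σ : Perm α) (u : α) : orb σ u (σ u) := orb_le.1 le_rfl u

lemma orb_swap [DecidableEq α] (x y : α) : orb (swap x y) = lk x y := by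
  apply le_antisymm
  · rw [orb_le]
    intro u
    by_cases hx : u = x
    · subst hx; rw [swap_apply_left]; exact lk_rel _ _
    · by_cases hy : u = y
      · subst hy; rw [swap_apply_right]; exact Setoid.symm' _ (lk_rel _ _)
      · rw [swap_apply_of_ne_of_ne hx hy]
  · rw [lk_le]
    have := orb_rel (swap x y) x
    rwa [swap_apply_left] at this

lemma orb_mul_le (σ τ : Perm α) : orb (σ * τ) ≤ orb σ ⊔ orb τ := by
  rw [orb_le]
  intro u
  exact Setoid.trans' _ ((le_sup_right : orb τ ≤ orb σ ⊔ orb τ) (orb_rel τ u))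
    ((le_sup_left : orb σ ≤ orb σ ⊔ orb τ) (orb_rel σ (τ u)))

lemma orb_one : orb (1 : Perm α) = ⊥ := by
  rw [eq_bot_iff, orb_le]; intro u; exact Setoid.refl' _ _

lemma orb_inv (σ : Perm α) : orb σ⁻¹ = orb σ := by
  have key : ∀ σ : Perm α, orb σ⁻¹ ≤ orb σ := by
    intro σ
    rw [orb_le]
    intro u
    have := orb_rel σ (σ⁻¹ u)
    simp only [Perm.inv_def, apply_symm_apply] at this
    exact Setoid.symm' _ this
  apply le_antisymm (key σ)
  have := key σ⁻¹
  rwa [inv_inv] at this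

/-- explicit join with a link -/
def jn (P : Setoid α) (x y : α) : Setoid α where
  r u v := P u v ∨ (P u x ∧ P y v) ∨ (P u y ∧ P x v)
  iseqv := by
    have s := fun {a b : α} (h : P a b) => P.symm' h
    have t := fun {a b c : α} (h : P a b) (h' : P b c) => P.trans' h h'
    refine ⟨fun u => Or.inl (P.refl' u), ?_, ?_⟩
    · rintro u v (h | ⟨h, h'⟩ | ⟨h, h'⟩)
      · exact Or.inl (s h)
      · exact Or.inr (Or.inr ⟨s h', s h⟩)
      · exact Or.inr (Or.inl ⟨s h', s h⟩)
    · rintro u v w (h | ⟨h, h'⟩ | ⟨h, h'⟩) (k | ⟨k, k'⟩ | ⟨k, k'⟩)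
      · exact Or.inl (t h k)
      · exact Or.inr (Or.inl ⟨t h k, k'⟩)
      · exact Or.inr (Or.inr ⟨t h k, k'⟩)
      · exact Or.inr (Or.inl ⟨h, t h' k⟩)
      · exact Or.inr (Or.inl ⟨h, k'⟩)
      · exact Or.inl (t h k')
      · exact Or.inr (Or.inr ⟨h, t h' k⟩)
      · exact Or.inl (t h k')
      · exact Or.inr (Or.inr ⟨h, k'⟩)

lemma sup_lk (P : Setoid α) (x y : α) : P ⊔ lk x y = jn P x y := by
  apply le_antisymm
  · rw [sup_le_iff, lk_le]
    refine ⟨fun u v h => Or.inl h, Or.inr (Or.inl ⟨P.refl' _, P.refl' _⟩)⟩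
  · intro u v h
    have h1 : P ≤ P ⊔ lk x y := le_sup_left
    have h2 : (P ⊔ lk x y) x y := (le_sup_right : lk x y ≤ P ⊔ lk x y) (lk_rel x y)
    rcases h with h | ⟨h, h3⟩ | ⟨h, h3⟩
    · exact h1 h
    · exact Setoid.trans' _ (h1 h) (Setoid.trans' _ h2 (h1 h3))
    · exact Setoid.trans' _ (h1 h) (Setoid.trans' _ (Setoid.symm' _ h2) (h1 h3))

/-- number of classes -/
noncomputable def rk (P : Setoid α) : ℕ := Nat.card (Quotient P)

lemma rk_anti [Finite α] {P Q : Setoid α} (h : P ≤ Q) : rk Q ≤ rk P := by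
  apply Nat.card_le_card_of_surjective (Quotient.map' id (fun a b hab => h hab) :
    Quotient P → Quotient Q)
  intro q
  induction q using Quotient.inductionOn with
  | _ a => exact ⟨Quotient.mk _ a, rfl⟩

lemma rk_sup_lt [Finite α] (P : Setoid α) (x y : α) (h : ¬ P x y) : rk (P ⊔ lk x y) + 1 ≤ rk P := by
  have hle : P ≤ P ⊔ lk x y := le_sup_left
  let f : Quotient P → Quotient (P ⊔ lk x y) := Quotient.map' id (fun a b hab => hle hab)
  have hs : Function.Surjective f := by
    intro q
    induction q using Quotient.inductionOn with
    | _ a => exact ⟨Quotient.mk _ a, rfl⟩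
  have hi : ¬ Function.Injective f := by
    intro hi
    have h1 : f (Quotient.mk _ x) = f (Quotient.mk _ y) := by
      apply Quotient.sound
      exact (le_sup_right : lk x y ≤ P ⊔ lk x y) (lk_rel x y)
    exact h (Quotient.exact (hi h1))
  have := Fintype.ofFinite (Quotient P)
  have := Fintype.ofFinite (Quotient (P ⊔ lk x y))
  have := Fintype.card_lt_of_surjective_not_injective f hs hi
  rw [rk, rk, Nat.card_eq_fintype_card, Nat.card_eq_fintype_card]
  exact this

lemma rk_le_sup [Finite α] (P : Setoid α) (x y : α) : rk P ≤ rk (P ⊔ lk x y) + 1 := by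
  classical
  rw [sup_lk]
  have hle : P ≤ jn P x y := fun u v h => Or.inl h
  let g : Quotient P → Quotient (jn P x y) := Quotient.map' id (fun a b hab => hle hab)
  let f : Quotient P → Option (Quotient (jn P x y)) := fun q =>
    if q = Quotient.mk _ y then none else some (g q)
  have hi : Function.Injective f := by
    intro a b hab
    simp only [f] at hab
    split_ifs at hab with h1 h2 h2
    · rw [h1, h2]
    · induction a using Quotient.inductionOn with
      | _ a =>
      induction b using Quotient.inductionOn with
      | _ b =>
      have h3 := Quotient.exact (Option.some.inj hab)
      rcases h3 with h | ⟨h, h'⟩ | ⟨h, h'⟩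
      · exact Quotient.sound h
      · exact absurd (Quotient.sound (P.symm' h')) h2
      · exact absurd (Quotient.sound h) h1
  have := Nat.card_le_card_of_injective f hi
  rwa [Finite.card_option] at this

lemma rk_bot [Finite α] : rk (⊥ : Setoid α) = Nat.card α := by
  apply le_antisymm
  · exact Nat.card_le_card_of_surjective (Quotient.mk ⊥) Quotient.mk_surjective
  · apply Nat.card_le_card_of_injective (Quotient.mk ⊥)
    intro a b h
    exact Quotient.exact h

/-- multiplying by a transposition joining two cycles -/
lemma orb_swap_mul [Finite α] [DecidableEq α] (σ : Perm α) (x y : α) (h : ¬ orb σ x y) :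
    orb σ ⊔ lk x y ≤ orb (swap x y * σ) := by
  -- it suffices to link `x` and `y`
  have key : orb (swap x y * σ) x y := by
    by_contra hn
    set Q := orb (swap x y * σ) with hQ
    -- work with inverses
    have hs : ∀ u, Q (σ⁻¹ (swap x y u)) u := by
      intro u
      have := orb_rel (swap x y * σ) (σ⁻¹ (swap x y u))
      simpa using this
    -- the points linked with `x` in `Q` and with `y` in `σ`
    have step : ∀ n : ℕ, Q x ((σ⁻¹ ^ n) (σ⁻¹ y)) ∧ orb σ y ((σ⁻¹ ^ n) (σ⁻¹ y)) := by
      intro n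
      have hinv : ∀ u, orb σ u (σ⁻¹ u) := by
        intro u; rw [← orb_inv]; exact orb_rel _ _
      induction n with
      | zero =>
        refine ⟨?_, hinv y⟩
        have := hs x
        rw [swap_apply_left] at this
        exact Q.symm' this
      | succ n ih =>
        obtain ⟨h1, h2⟩ := ih
        rw [pow_succ', Perm.mul_apply]
        set u := (σ⁻¹ ^ n) (σ⁻¹ y)
        refine ⟨?_, Setoid.trans' _ h2 (hinv u)⟩
        have hux : u ≠ x := by rintro h3; rw [h3] at h2; exact h (Setoid.symm' _ h2)
        have huy : u ≠ y := by rintro h3; rw [h3] at h1; exact hn h1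
        have := hs u
        rw [swap_apply_of_ne_of_ne hux huy] at this
        exact Q.trans' h1 (Q.symm' this)
    have hpos := orderOf_pos σ⁻¹
    have h1 := (step (orderOf σ⁻¹ - 1)).1
    rw [← Perm.mul_apply, ← pow_succ, Nat.sub_add_cancel hpos, pow_orderOf_eq_one] at h1
    exact hn h1
  rw [sup_le_iff, lk_le]
  refine ⟨?_, key⟩
  have h1 : orb σ ≤ orb (swap x y) ⊔ orb (swap x y * σ) := by
    have := orb_mul_le (swap x y) (swap x y * σ)
    rwa [← mul_assoc, swap_mul_self, one_mul] at this
  rw [orb_swap] at h1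
  exact h1.trans (sup_le (lk_le.2 key) le_rfl)

lemma rk_orb_swap_mul_le [Finite α] [DecidableEq α] (σ : Perm α) (x y : α) :
    rk (orb (swap x y * σ)) ≤ rk (orb σ) + 1 := by
  have h1 : orb σ ≤ orb (swap x y * σ) ⊔ lk x y := by
    have := orb_mul_le (swap x y) (swap x y * σ)
    rwa [← mul_assoc, swap_mul_self, one_mul, orb_swap, sup_comm] at this
  have := rk_le_sup (orb (swap x y * σ)) x y
  have := rk_anti h1
  omega

lemma rk_orb_le_swap_mul [Finite α] [DecidableEq α] (σ : Perm α) (x y : α) :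
    rk (orb σ) ≤ rk (orb (swap x y * σ)) + 1 := by
  have := rk_orb_swap_mul_le (swap x y * σ) x y
  rwa [← mul_assoc, swap_mul_self, one_mul] at this

lemma rk_orb_formPerm [Finite α] [DecidableEq α] (L : List α) : ∀ (x : α) (g : Perm α),
    rk (orb g) ≤ rk (orb (List.formPerm (x :: L) * g)) + L.length := by
  induction L with
  | nil => intro x g; simp
  | cons y L ih =>
    intro x g
    rw [List.formPerm_cons_cons, mul_assoc, List.length_cons]
    have h1 := ih y g
    have h2 := rk_orb_le_swap_mul ((y :: L).formPerm * g) x y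
    omega

/-- the genus condition on a pair (permutation, partition) reached by a word of length `m` -/
def Gen (m : ℕ) (σ : Perm α) (P : Setoid α) : Prop :=
  orb σ ≤ P ∧ Nat.card α + rk (orb σ) ≤ m + 2 * rk P

lemma Gen_zero [Finite α] : Gen 0 (1 : Perm α) ⊥ := by
  refine ⟨by rw [orb_one], ?_⟩
  rw [orb_one, rk_bot]; omega

lemma Gen_succ [Finite α] [DecidableEq α] {m : ℕ} {σ : Perm α} {P : Setoid α} (h : Gen m σ P)
    (x y : α) : Gen (m + 1) (swap x y * σ) (lk x y ⊔ P) := by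
  obtain ⟨h1, h2⟩ := h
  refine ⟨?_, ?_⟩
  · refine (orb_mul_le _ _).trans ?_
    rw [orb_swap]
    exact sup_le_sup le_rfl h1
  · rw [sup_comm]
    by_cases hP : P x y
    · have : P ⊔ lk x y = P := sup_eq_left.2 (lk_le.2 hP)
      rw [this]
      have := rk_orb_swap_mul_le σ x y
      omega
    · have hσ : ¬ orb σ x y := fun h => hP (h1 h)
      have h3 := rk_anti (orb_swap_mul σ x y hσ)
      have h4 := rk_sup_lt _ x y hσ
      have h5 := rk_le_sup P x y
      omega

/-- the partition with one block `A` and singletons -/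
def blk (A : Set α) : Setoid α where
  r u v := u = v ∨ (u ∈ A ∧ v ∈ A)
  iseqv := by
    refine ⟨fun u => Or.inl rfl, ?_, ?_⟩
    · rintro u v (h | ⟨h, h'⟩)
      · exact Or.inl h.symm
      · exact Or.inr ⟨h', h⟩
    · rintro u v w (h | ⟨h, h'⟩) (k | ⟨k, k'⟩)
      · exact Or.inl (h.trans k)
      · subst h; exact Or.inr ⟨k, k'⟩
      · subst k; exact Or.inr ⟨h, h'⟩
      · exact Or.inr ⟨h, k'⟩

lemma blk_rel {A : Set α} {u v : α} : blk A u v ↔ u = v ∨ (u ∈ A ∧ v ∈ A) := Iff.rfl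

lemma blk_le {A : Set α} {P : Setoid α} : blk A ≤ P ↔ ∀ u ∈ A, ∀ v ∈ A, P u v := by
  constructor
  · intro h u hu v hv
    exact h (Or.inr ⟨hu, hv⟩)
  · rintro h u v (h1 | ⟨h1, h2⟩)
    · subst h1; exact P.refl' _
    · exact h u h1 v h2

lemma rk_blk [Finite α] [DecidableEq α] (A : Finset α) (x : α) (hx : x ∉ A) :
    rk (blk (insert x A : Finset α) : Setoid α) + A.card ≤ Nat.card α := by
  induction A using Finset.induction_on with
  | empty =>
    rw [← rk_bot]
    exact rk_anti bot_le
  | insert a A ha ih =>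
    have hx' : x ∉ A := fun h => hx (Finset.mem_insert_of_mem h)
    have hxa : a ≠ x := by rintro rfl; exact hx (Finset.mem_insert_self _ _)
    have h1 : blk ((insert x A : Finset α) : Set α) ⊔ lk x a ≤
        blk ((insert x (insert a A) : Finset α) : Set α) := by
      rw [sup_le_iff, blk_le, lk_le]
      refine ⟨fun u hu v hv => Or.inr ⟨?_, ?_⟩, Or.inr ⟨?_, ?_⟩⟩
      · simp at hu ⊢; tauto
      · simp at hv ⊢; tauto
      · simp
      · simp
    have h2 := rk_sup_lt (blk ((insert x A : Finset α) : Set α)) x a (by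
      rintro (h | ⟨_, h⟩)
      · exact hxa h.symm
      · simp at h; tauto)
    have h3 := rk_anti h1
    have h4 := ih hx'
    rw [Finset.card_insert_of_notMem ha]
    omega

lemma rk_blk' [Finite α] [DecidableEq α] (A : Finset α) (hA : A.Nonempty) :
    rk (blk (A : Set α)) + A.card ≤ Nat.card α + 1 := by
  obtain ⟨x, hx⟩ := hA
  have := rk_blk (A.erase x) x (by simp)
  rw [Finset.insert_erase hx, Finset.card_erase_of_mem hx] at this
  have : 0 < A.card := Finset.card_pos.2 ⟨x, hx⟩
  omega

end parts
end Hur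

namespace Hur

/-- partitions, as a monoid under join -/
def Part (α : Type*) := Setoid α

instance (α : Type*) : CommMonoid (Part α) where
  mul P Q := ((P : Setoid α) ⊔ (Q : Setoid α) : Setoid α)
  one := (⊥ : Setoid α)
  mul_assoc P Q R := sup_assoc (α := Setoid α) P Q R
  one_mul P := bot_sup_eq (α := Setoid α) P
  mul_one P := sup_bot_eq (α := Setoid α) P
  mul_comm P Q := sup_comm (α := Setoid α) P Q

instance finite_setoid (α : Type*) [Finite α] : Finite (Setoid α) := by
  apply Finite.of_injective (fun (P : Setoid α) => (fun x y => P x y : α → α → Prop))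
  intro P Q h
  apply Setoid.ext
  intro a b
  exact iff_of_eq (congrFun (congrFun h a) b)

instance (α : Type*) [Finite α] : Finite (Part α) := finite_setoid α

noncomputable instance (α : Type*) [Finite α] : Fintype (Setoid α) := Fintype.ofFinite _
noncomputable instance (α : Type*) [Finite α] : Fintype (Part α) := Fintype.ofFinite _

/-- pairs (permutation, partition) -/
abbrev Mo (α : Type*) := Perm α × Part α

/-- the partition of a pair -/
def Mo.prt {α : Type*} (s : Mo α) : Setoid α := s.2

/-- pair -/
def mk' {α : Type*} (σ : Perm α) (P : Setoid α) : Mo α := (σ, P)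

lemma mk'_mul {α : Type*} (σ τ : Perm α) (P Q : Setoid α) :
    mk' σ P * mk' τ Q = mk' (σ * τ) (P ⊔ Q) := rfl

lemma one_eq {α : Type*} : (1 : Mo α) = mk' 1 ⊥ := rfl

lemma mul_prt {α : Type*} (s t : Mo α) : (s * t).prt = s.prt ⊔ t.prt := rfl
lemma one_prt {α : Type*} : (1 : Mo α).prt = ⊥ := rfl
@[simp] lemma mk'_prt {α : Type*} (σ : Perm α) (P : Setoid α) : (mk' σ P).prt = P := rfl
@[simp] lemma mk'_fst {α : Type*} (σ : Perm α) (P : Setoid α) : (mk' σ P).1 = σ := rfl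

lemma Mo_ext {α : Type*} {s t : Mo α} (h1 : s.1 = t.1) (h2 : s.prt = t.prt) : s = t :=
  Prod.ext h1 h2

lemma mk'_eta {α : Type*} (s : Mo α) : mk' s.1 s.prt = s := rfl

/-- a permutation with its orbit partition -/
def el {α : Type*} (τ : Perm α) : Mo α := mk' τ (orb τ)

/-- the algebra -/
abbrev Al (α : Type*) := MonoidAlgebra ℚ (Mo α)

open scoped Classical in
section
variable {α : Type*} [Fintype α] [DecidableEq α]

/-- formal sum of permutations -/
noncomputable def XX (T : Finset (Perm α)) : Al α := ∑ τ ∈ T, MonoidAlgebra.single (el τ) (1 : ℚ)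

lemma coeff_single_mul (m : Mo α) (f : Al α) (s : Mo α) :
    (MonoidAlgebra.single m (1 : ℚ) * f).coeff s =
      ∑ t ∈ Finset.univ.filter (fun t => m * t = s), f.coeff t := by
  induction f using MonoidAlgebra.induction_linear with
  | zero => simp
  | add f g hf hg => rw [mul_add, MonoidAlgebra.coeff_add, Finsupp.add_apply, hf, hg,
      ← Finset.sum_add_distrib]; simp
  | single a r =>
    rw [MonoidAlgebra.single_mul_single, one_mul, MonoidAlgebra.coeff_single,
      MonoidAlgebra.coeff_single, Finsupp.single_apply]
    simp only [Finsupp.single_apply]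
    rw [Finset.sum_ite_eq]
    simp

lemma coeff_el_mul (τ : Perm α) (f : Al α) (σ : Perm α) (P : Setoid α) :
    (MonoidAlgebra.single (el τ) (1 : ℚ) * f).coeff (mk' σ P) =
      ∑ Q ∈ (Finset.univ : Finset (Setoid α)).filter (fun Q => orb τ ⊔ Q = P),
        f.coeff (mk' (τ⁻¹ * σ) Q) := by
  rw [coeff_single_mul]
  symm
  apply Finset.sum_of_injOn (fun Q : Setoid α => mk' (τ⁻¹ * σ) Q)
  · intro Q _ Q' _ h
    exact congrArg Mo.prt h
  · intro Q hQ
    simp only [Finset.mem_coe, Finset.mem_filter, Finset.mem_univ, true_and] at hQ ⊢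
    rw [el, mk'_mul, mul_inv_cancel_left, hQ]
  · intro t ht hn
    exfalso
    apply hn
    simp only [Finset.mem_filter, Finset.mem_univ, true_and] at ht
    refine ⟨t.prt, ?_, ?_⟩
    · simp only [Finset.mem_coe, Finset.mem_filter, Finset.mem_univ, true_and]
      exact congrArg Mo.prt ht
    · apply Mo_ext
      · have := congrArg Prod.fst ht
        simp only [mk'_fst]
        rw [inv_mul_eq_iff_eq_mul]
        exact this.symm
      · rfl
  · intro Q _; rfl

lemma coeff_XX_mul (T : Finset (Perm α)) (f : Al α) (σ : Perm α) (P : Setoid α) :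
    (XX T * f).coeff (mk' σ P) = ∑ τ ∈ T,
      ∑ Q ∈ (Finset.univ : Finset (Setoid α)).filter (fun Q => orb τ ⊔ Q = P),
        f.coeff (mk' (τ⁻¹ * σ) Q) := by
  rw [XX, Finset.sum_mul, MonoidAlgebra.coeff_sum, Finsupp.finsetSum_apply]
  exact Finset.sum_congr rfl fun τ _ => coeff_el_mul τ f σ P

/-- supported in a predicate -/
def Sup (f : Al α) (S : Mo α → Prop) : Prop := ∀ s, f.coeff s ≠ 0 → S s

lemma Sup_XX_mul {T : Finset (Perm α)} {f : Al α} {S S' : Mo α → Prop} (hf : Sup f S)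
    (h : ∀ τ ∈ T, ∀ s, S s → S' (el τ * s)) : Sup (XX T * f) S' := by
  intro s hs
  rw [XX, Finset.sum_mul, MonoidAlgebra.coeff_sum, Finsupp.finsetSum_apply] at hs
  obtain ⟨τ, hτ, h1⟩ := Finset.exists_ne_zero_of_sum_ne_zero hs
  rw [coeff_single_mul] at h1
  obtain ⟨t, ht, h2⟩ := Finset.exists_ne_zero_of_sum_ne_zero h1
  simp only [Finset.mem_filter, Finset.mem_univ, true_and] at ht
  rw [← ht]
  exact h τ hτ t (hf t h2)

lemma Sup_one {S : Mo α → Prop} (h : S 1) : Sup (1 : Al α) S := by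
  intro s hs
  rw [MonoidAlgebra.one_def, MonoidAlgebra.coeff_single, Finsupp.single_apply] at hs
  split_ifs at hs with h1
  · rwa [← h1]
  · exact absurd rfl hs

lemma Sup_pow_mul {T : Finset (Perm α)} {f : Al α} (S : ℕ → Mo α → Prop) (m k : ℕ)
    (hf : Sup f (S k)) (h : ∀ k, ∀ τ ∈ T, ∀ s, S k s → S (k + 1) (el τ * s)) :
    Sup (XX T ^ m * f) (S (m + k)) := by
  induction m with
  | zero => simpa using hf
  | succ m ih =>
    rw [pow_succ', mul_assoc, show m + 1 + k = (m + k) + 1 by ring]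
    exact Sup_XX_mul ih (h _)

/-- projection killing everything not below `P` -/
noncomputable def prjHom (P : Setoid α) : Mo α →* Al α where
  toFun s := if s.prt ≤ P then MonoidAlgebra.single s 1 else 0
  map_one' := by rw [one_prt, if_pos bot_le, MonoidAlgebra.one_def]
  map_mul' s t := by
    rw [mul_prt]
    by_cases h1 : s.prt ≤ P
    · by_cases h2 : t.prt ≤ P
      · rw [if_pos (sup_le h1 h2), if_pos h1, if_pos h2, MonoidAlgebra.single_mul_single, one_mul]
      · rw [if_neg (fun h => h2 (le_sup_right.trans h)), if_neg h2, mul_zero]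
    · rw [if_neg (fun h => h1 (le_sup_left.trans h)), if_neg h1, zero_mul]

/-- projection killing everything not below `P` -/
noncomputable def prj (P : Setoid α) : Al α →ₐ[ℚ] Al α := MonoidAlgebra.lift ℚ _ _ (prjHom P)

lemma coeff_prj (P : Setoid α) (f : Al α) (s : Mo α) (hs : s.prt ≤ P) :
    (prj P f).coeff s = f.coeff s := by
  induction f using MonoidAlgebra.induction_linear with
  | zero => simp
  | add f g hf hg => rw [map_add, MonoidAlgebra.coeff_add, Finsupp.add_apply, hf, hg]; rfl
  | single a r =>
    rw [prj, MonoidAlgebra.lift_single]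
    simp only [prjHom, MonoidHom.coe_mk, OneHom.coe_mk]
    split_ifs with h
    · simp
    · rw [smul_zero, MonoidAlgebra.coeff_single, Finsupp.single_apply, if_neg]
      · rfl
      · rintro rfl; exact h hs

lemma prj_XX (P : Setoid α) (T : Finset (Perm α)) :
    prj P (XX T) = XX (T.filter (fun τ => orb τ ≤ P)) := by
  rw [XX, XX, map_sum, Finset.sum_filter]
  apply Finset.sum_congr rfl
  intro τ _
  rw [prj, MonoidAlgebra.lift_single, one_smul]
  rfl

/-- transpositions -/
noncomputable def sw (α : Type*) [Fintype α] [DecidableEq α] : Finset (Perm α) :=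
  Finset.univ.filter (fun τ => τ.IsSwap)
/-- transpositions moving `p` -/
noncomputable def star (p : α) : Finset (Perm α) := (sw α).filter (fun τ => τ p ≠ p)
/-- transpositions fixing `p` -/
noncomputable def non (p : α) : Finset (Perm α) := (sw α).filter (fun τ => τ p = p)

lemma mem_sw {τ : Perm α} : τ ∈ sw α ↔ τ.IsSwap := by simp [sw]
lemma mem_star {p : α} {τ : Perm α} : τ ∈ star p ↔ τ.IsSwap ∧ τ p ≠ p := by simp [star, mem_sw]
lemma mem_non {p : α} {τ : Perm α} : τ ∈ non p ↔ τ.IsSwap ∧ τ p = p := by simp [non, mem_sw]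

lemma XX_sw (p : α) : XX (sw α) = XX (star p) + XX (non p) := by
  rw [XX, XX, XX, star, non, add_comm, Finset.sum_filter_add_sum_filter_not]

lemma star_eq (p : α) : star p = (Finset.univ.erase p).image (fun a => swap a p) := by
  ext τ
  rw [mem_star, Finset.mem_image]
  constructor
  · rintro ⟨⟨x, y, hxy, rfl⟩, h2⟩
    by_cases hx : p = x
    · subst hx; exact ⟨y, by simpa using hxy.symm, swap_comm _ _⟩
    · by_cases hy : p = y
      · subst hy; exact ⟨x, by simpa using hxy, rfl⟩
      · exact absurd (swap_apply_of_ne_of_ne hx hy) h2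
  · rintro ⟨a, ha, rfl⟩
    have ha' : a ≠ p := by simpa using ha
    exact ⟨⟨a, p, ha', rfl⟩, by simpa using ha'⟩

lemma sum_star (p : α) (F : Perm α → ℚ) :
    ∑ τ ∈ star p, F τ = ∑ a ∈ Finset.univ.erase p, F (swap a p) := by
  rw [star_eq, Finset.sum_image]
  intro a _ b _ h
  have := congrArg (fun τ : Perm α => τ p) h
  simpa using this

lemma el_conj (s τ : Perm α) : el s * el τ = el τ * el (τ⁻¹ * s * τ) := by
  rw [el, el, el, mk'_mul, mk'_mul]
  congr 1
  · group
  · have e : ∀ s τ : Perm α, orb (τ⁻¹ * s * τ) ≤ orb s ⊔ orb τ := by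
      intro s τ
      refine (orb_mul_le _ _).trans (sup_le ((orb_mul_le _ _).trans ?_) le_sup_right)
      rw [orb_inv]; exact sup_le le_sup_right le_sup_left
    apply le_antisymm
    · refine sup_le ?_ le_sup_left
      have := e (τ⁻¹ * s * τ) τ⁻¹
      rw [orb_inv, sup_comm] at this
      have e2 : τ⁻¹⁻¹ * (τ⁻¹ * s * τ) * τ⁻¹ = s := by group
      rwa [e2] at this
    · exact sup_le le_sup_right (e s τ)

lemma isSwap_conj (s τ : Perm α) (h : s.IsSwap) : (τ⁻¹ * s * τ).IsSwap := by
  obtain ⟨x, y, hxy, rfl⟩ := h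
  refine ⟨τ⁻¹ x, τ⁻¹ y, by simpa using hxy, ?_⟩
  have := Equiv.swap_apply_apply τ⁻¹ x y
  rw [this]; simp

lemma comm_star_non (p : α) : Commute (XX (star p)) (XX (non p)) := by
  rw [XX, XX]
  apply Commute.sum_right
  intro τ hτ
  rw [mem_non] at hτ
  rw [Commute, SemiconjBy, Finset.sum_mul, Finset.mul_sum]
  apply Finset.sum_bij' (fun s _ => τ⁻¹ * s * τ) (fun s _ => τ * s * τ⁻¹)
  · intro s hs
    rw [mem_star] at hs ⊢
    refine ⟨isSwap_conj _ _ hs.1, ?_⟩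
    rw [Perm.mul_apply, Perm.mul_apply, hτ.2, Ne, Perm.inv_eq_iff_eq, hτ.2]
    exact hs.2
  · intro s hs
    rw [mem_star] at hs ⊢
    have h1 : τ⁻¹ p = p := by rw [Perm.inv_eq_iff_eq, hτ.2]
    refine ⟨?_, ?_⟩
    · have := isSwap_conj s τ⁻¹ hs.1
      rwa [inv_inv] at this
    · rw [Perm.mul_apply, Perm.mul_apply, h1]
      intro h
      apply hs.2
      apply τ.injective
      rw [h, hτ.2]
  · intro s _; group
  · intro s _; group
  · intro s _
    rw [MonoidAlgebra.single_mul_single, MonoidAlgebra.single_mul_single, el_conj]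

lemma comm_XX (T T' : Finset (Perm α)) (h : ∀ τ ∈ T, ∀ τ' ∈ T', Commute τ τ') :
    Commute (XX T) (XX T') := by
  rw [XX, XX]
  apply Commute.sum_left
  intro τ hτ
  apply Commute.sum_right
  intro τ' hτ'
  rw [Commute, SemiconjBy, MonoidAlgebra.single_mul_single, MonoidAlgebra.single_mul_single,
    el, el, mk'_mul, mk'_mul, h τ hτ τ' hτ', sup_comm]

lemma Sup_gen (p : α) (k m : ℕ) :
    Sup (XX (star p) ^ k * XX (non p) ^ m) (fun s => Gen (k + m) s.1 s.prt) := by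
  have h : ∀ k, ∀ τ : Perm α, τ.IsSwap → ∀ s : Mo α, Gen k s.1 s.prt →
      Gen (k + 1) (el τ * s).1 (el τ * s).prt := by
    rintro k τ ⟨x, y, _, rfl⟩ s hs
    have := Gen_succ hs x y
    rw [el, mul_prt, mk'_prt, orb_swap]
    exact this
  apply Sup_pow_mul (fun k s => Gen k s.1 s.prt)
  · rw [← mul_one (XX (non p) ^ m)]
    apply Sup_pow_mul (fun k s => Gen k s.1 s.prt) m 0
    · exact Sup_one Gen_zero
    · intro k τ hτ; exact h k τ (mem_non.1 hτ).1
  · intro k τ hτ; exact h k τ (mem_star.1 hτ).1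

lemma Sup_gen_sw (m : ℕ) : Sup (XX (sw α) ^ m) (fun s => Gen m s.1 s.prt) := by
  rw [← mul_one (XX (sw α) ^ m)]
  apply Sup_pow_mul (fun k s => Gen k s.1 s.prt) m 0
  · exact Sup_one Gen_zero
  · rintro k τ hτ s hs
    obtain ⟨x, y, _, rfl⟩ := mem_sw.1 hτ
    have := Gen_succ hs x y
    rw [el, mul_prt, mk'_prt, orb_swap]
    exact this

/-- supports below a block -/
lemma Sup_blk (T T' : Finset (Perm α)) (B : Set α) (hT : ∀ τ ∈ T, orb τ ≤ blk B)
    (hT' : ∀ τ ∈ T', orb τ ≤ blk B) (k m : ℕ) :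
    Sup (XX T ^ k * XX T' ^ m) (fun s => orb s.1 ≤ s.prt ∧ s.prt ≤ blk B) := by
  have h : ∀ τ : Perm α, orb τ ≤ blk B → ∀ s : Mo α, (orb s.1 ≤ s.prt ∧ s.prt ≤ blk B) →
      (orb (el τ * s).1 ≤ (el τ * s).prt ∧ (el τ * s).prt ≤ blk B) := by
    rintro τ hτ s ⟨h1, h2⟩
    rw [mul_prt, el, mk'_prt]
    exact ⟨(orb_mul_le _ _).trans (sup_le_sup le_rfl h1), sup_le hτ h2⟩
  apply Sup_pow_mul (fun _ s => orb s.1 ≤ s.prt ∧ s.prt ≤ blk B) k m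
  · rw [← mul_one (XX T' ^ m)]
    apply Sup_pow_mul (fun _ s => orb s.1 ≤ s.prt ∧ s.prt ≤ blk B) m 0
    · exact Sup_one ⟨orb_one.le, bot_le⟩
    · intro _ τ hτ; exact h τ (hT' τ hτ)
  · intro _ τ hτ; exact h τ (hT τ hτ)

end
end Hur

namespace Hur

section split
variable {α : Type*}

lemma blk_sup (B C : Set α) (hd : Disjoint B C) (u v : α) :
    (blk B ⊔ blk C) u v ↔ u = v ∨ (u ∈ B ∧ v ∈ B) ∨ (u ∈ C ∧ v ∈ C) := by
  have hd' : ∀ x, x ∈ B → x ∈ C → False := fun x h1 h2 => Set.disjoint_left.1 hd h1 h2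
  constructor
  · let Q : Setoid α := ⟨fun u v => u = v ∨ (u ∈ B ∧ v ∈ B) ∨ (u ∈ C ∧ v ∈ C), by
      refine ⟨fun u => Or.inl rfl, ?_, ?_⟩
      · rintro u v (h | h | h)
        · exact Or.inl h.symm
        · exact Or.inr (Or.inl h.symm)
        · exact Or.inr (Or.inr h.symm)
      · rintro u v w (h | h | h) (k | k | k)
        · exact Or.inl (h.trans k)
        · subst h; exact Or.inr (Or.inl k)
        · subst h; exact Or.inr (Or.inr k)
        · subst k; exact Or.inr (Or.inl h)
        · exact Or.inr (Or.inl ⟨h.1, k.2⟩)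
        · exact (hd' v h.2 k.1).elim
        · subst k; exact Or.inr (Or.inr h)
        · exact (hd' v k.1 h.2).elim
        · exact Or.inr (Or.inr ⟨h.1, k.2⟩)⟩
    have h : blk B ⊔ blk C ≤ Q := by
      rw [sup_le_iff, blk_le, blk_le]
      exact ⟨fun u hu v hv => Or.inr (Or.inl ⟨hu, hv⟩), fun u hu v hv => Or.inr (Or.inr ⟨hu, hv⟩)⟩
    intro huv
    exact h huv
  · rintro (h | h | h)
    · subst h; exact Setoid.refl' _ _
    · exact (le_sup_left : blk B ≤ blk B ⊔ blk C) (Or.inr h)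
    · exact (le_sup_right : blk C ≤ blk B ⊔ blk C) (Or.inr h)

lemma part_unique (B C : Set α) (hd : Disjoint B C) (P P' Q Q' : Setoid α) (hP : P ≤ blk B)
    (hP' : P' ≤ blk B) (hQ' : Q' ≤ blk C) (h : P ⊔ Q = P' ⊔ Q') : P ≤ P' := by
  have hd' : ∀ x, x ∈ B → x ∈ C → False := fun x h1 h2 => Set.disjoint_left.1 hd h1 h2
  let R : Setoid α := ⟨fun u v => (u ∈ B ↔ v ∈ B) ∧ (u ∈ B → P' u v), by
    refine ⟨fun u => ⟨Iff.rfl, fun _ => Setoid.refl' _ _⟩, ?_, ?_⟩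
    · rintro u v ⟨h1, h2⟩
      exact ⟨h1.symm, fun a => Setoid.symm' _ (h2 (h1.2 a))⟩
    · rintro u v w ⟨h1, h2⟩ ⟨k1, k2⟩
      exact ⟨h1.trans k1, fun a => Setoid.trans' _ (h2 a) (k2 (h1.1 a))⟩⟩
  have h1 : P' ⊔ Q' ≤ R := by
    apply sup_le
    · intro u v huv
      refine ⟨?_, fun _ => huv⟩
      rcases hP' huv with h | ⟨h, h'⟩
      · rw [h]
      · exact ⟨fun _ => h', fun _ => h⟩
    · intro u v huv
      rcases hQ' huv with h | ⟨h, h'⟩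
      · subst h; exact Setoid.refl' _ _
      · exact ⟨⟨fun a => (hd' _ a h).elim, fun a => (hd' _ a h').elim⟩, fun a => (hd' _ a h).elim⟩
  intro u v huv
  have h2 : R u v := h1 (h ▸ (le_sup_left : P ≤ P ⊔ Q) huv)
  rcases hP huv with h3 | ⟨h3, _⟩
  · subst h3; exact Setoid.refl' _ _
  · exact h2.2 h3

/-- the support condition -/
def Bel (B : Set α) (s : Mo α) : Prop := orb s.1 ≤ s.prt ∧ s.prt ≤ blk B

lemma Bel.fix {B : Set α} {s : Mo α} (h : Bel B s) (u : α) (hu : u ∉ B) : s.1 u = u := by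
  have : blk B u (s.1 u) := h.2 (h.1 (orb_rel s.1 u))
  rcases this with h | h
  · exact h.symm
  · exact (hu h.1).elim

lemma Mo_unique (B C : Set α) (hd : Disjoint B C) (s s' t t' : Mo α) (hs : Bel B s)
    (hs' : Bel B s') (ht : Bel C t) (ht' : Bel C t') (h : s * t = s' * t') : s = s' ∧ t = t' := by
  have hd' : ∀ x, x ∈ B → x ∉ C := fun x h1 h2 => Set.disjoint_left.1 hd h1 h2
  have hp : s.prt ⊔ t.prt = s'.prt ⊔ t'.prt := congrArg Mo.prt h
  have hf : s.1 * t.1 = s'.1 * t'.1 := congrArg Prod.fst h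
  have e1 : s.prt = s'.prt := le_antisymm
    (part_unique B C hd _ _ _ _ hs.2 hs'.2 ht'.2 hp)
    (part_unique B C hd _ _ _ _ hs'.2 hs.2 ht.2 hp.symm)
  have e2 : t.prt = t'.prt := by
    rw [sup_comm, sup_comm (s'.prt)] at hp
    exact le_antisymm
      (part_unique C B hd.symm _ _ _ _ ht.2 ht'.2 hs'.2 hp)
      (part_unique C B hd.symm _ _ _ _ ht'.2 ht.2 hs.2 hp.symm)
  have e3 : s.1 = s'.1 := by
    ext u
    by_cases hu : u ∈ B
    · have := congrArg (fun g : Perm α => g u) hf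
      simp only [Perm.mul_apply] at this
      rwa [ht.fix u (hd' u hu), ht'.fix u (hd' u hu)] at this
    · rw [hs.fix u hu, hs'.fix u hu]
  have e4 : t.1 = t'.1 := by rw [e3] at hf; exact mul_left_cancel hf
  exact ⟨Mo_ext e3 e1, Mo_ext e4 e2⟩

open scoped Classical in
section
variable [Fintype α] [DecidableEq α]

/-- counting: all words -/
noncomputable def NN (m : ℕ) (σ : Perm α) (P : Setoid α) : ℚ := (XX (sw α) ^ m).coeff (mk' σ P)

/-- counting: star words first -/
noncomputable def GG (p : α) (k m : ℕ) (σ : Perm α) (P : Setoid α) : ℚ :=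
  (XX (star p) ^ k * XX (non p) ^ m).coeff (mk' σ P)

lemma swap_commute_of (B C : Set α) (hd : Disjoint B C) (τ τ' : Perm α) (h : orb τ ≤ blk B)
    (h' : orb τ' ≤ blk C) : Commute τ τ' := by
  have hd' : ∀ x, x ∈ B → x ∉ C := fun x h1 h2 => Set.disjoint_left.1 hd h1 h2
  have h1 : Bel B (mk' τ (blk B)) := ⟨h, le_rfl⟩
  have h2 : Bel C (mk' τ' (blk C)) := ⟨h', le_rfl⟩
  apply Perm.Disjoint.commute
  intro u
  by_cases hu : u ∈ B
  · right; exact h2.fix u (hd' u hu)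
  · left; exact h1.fix u hu

lemma split_filter (B C : Set α) (hd : Disjoint B C) (τ : Perm α) (hτ : τ.IsSwap) :
    orb τ ≤ blk B ⊔ blk C ↔ orb τ ≤ blk B ∨ orb τ ≤ blk C := by
  obtain ⟨x, y, hxy, rfl⟩ := hτ
  rw [orb_swap, lk_le, lk_le, lk_le, blk_sup B C hd, blk_rel, blk_rel]
  tauto

lemma split_not_both (B C : Set α) (hd : Disjoint B C) (τ : Perm α) (hτ : τ.IsSwap)
    (h1 : orb τ ≤ blk B) (h2 : orb τ ≤ blk C) : False := by
  obtain ⟨x, y, hxy, rfl⟩ := hτ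
  rw [orb_swap, lk_le, blk_rel] at h1 h2
  rcases h1 with h1 | h1
  · exact hxy h1
  · rcases h2 with h2 | h2
    · exact hxy h2
    · exact Set.disjoint_left.1 hd h1.1 h2.1

lemma split_lemma (B C : Set α) (hd : Disjoint B C) (p : α) (hp : p ∈ C) (σB σC : Perm α)
    (hB : orb σB ≤ blk B) (hC : orb σC ≤ blk C) (k m : ℕ) :
    GG p k m (σB * σC) (blk B ⊔ blk C) = ∑ i ∈ Finset.range (m + 1),
      (m.choose i : ℚ) * (NN i σB (blk B) * GG p k (m - i) σC (blk C)) := by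
  have hpB : p ∉ B := fun h => Set.disjoint_left.1 hd h hp
  set sB := (sw α).filter (fun τ => orb τ ≤ blk B) with hsB
  set sC := (star p).filter (fun τ => orb τ ≤ blk C) with hsC
  set nC := (non p).filter (fun τ => orb τ ≤ blk C) with hnC
  have hfix : ∀ τ : Perm α, orb τ ≤ blk B → τ p = p := fun τ h =>
    Bel.fix (s := mk' τ (blk B)) ⟨h, le_rfl⟩ p hpB
  have e1 : (star p).filter (fun τ => orb τ ≤ blk B ⊔ blk C) = sC := by
    ext τ
    rw [hsC, Finset.mem_filter, Finset.mem_filter]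
    constructor
    · rintro ⟨h1, h2⟩
      refine ⟨h1, ?_⟩
      rw [mem_star] at h1
      rcases (split_filter B C hd τ h1.1).1 h2 with h3 | h3
      · exact (h1.2 (hfix τ h3)).elim
      · exact h3
    · rintro ⟨h1, h2⟩
      exact ⟨h1, h2.trans le_sup_right⟩
  have e2 : XX ((non p).filter (fun τ => orb τ ≤ blk B ⊔ blk C)) = XX sB + XX nC := by
    rw [XX, XX, XX, ← Finset.sum_union]
    · apply Finset.sum_congr _ (fun _ _ => rfl)
      ext τ
      rw [hsB, hnC, Finset.mem_union, Finset.mem_filter, Finset.mem_filter, Finset.mem_filter]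
      constructor
      · rintro ⟨h1, h2⟩
        rcases (split_filter B C hd τ (mem_non.1 h1).1).1 h2 with h3 | h3
        · exact Or.inl ⟨mem_sw.2 (mem_non.1 h1).1, h3⟩
        · exact Or.inr ⟨h1, h3⟩
      · rintro (⟨h1, h2⟩ | ⟨h1, h2⟩)
        · exact ⟨mem_non.2 ⟨mem_sw.1 h1, hfix τ h2⟩, h2.trans le_sup_left⟩
        · exact ⟨h1, h2.trans le_sup_right⟩
    · rw [Finset.disjoint_left]
      intro τ h1 h2
      rw [hsB, Finset.mem_filter] at h1
      rw [hnC, Finset.mem_filter] at h2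
      exact split_not_both B C hd τ (mem_sw.1 h1.1) h1.2 h2.2
  have c1 : Commute (XX sB) (XX nC) := comm_XX _ _ fun τ h τ' h' =>
    swap_commute_of B C hd _ _ (Finset.mem_filter.1 h).2 (Finset.mem_filter.1 h').2
  have c2 : Commute (XX sB) (XX sC) := comm_XX _ _ fun τ h τ' h' =>
    swap_commute_of B C hd _ _ (Finset.mem_filter.1 h).2 (Finset.mem_filter.1 h').2
  rw [GG, ← coeff_prj (blk B ⊔ blk C) _ _ le_rfl, map_mul, map_pow, map_pow, prj_XX, prj_XX, e1, e2,
    c1.add_pow, Finset.mul_sum, MonoidAlgebra.coeff_sum, Finsupp.finsetSum_apply]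
  apply Finset.sum_congr rfl
  intro i _
  have e3 : XX sC ^ k * (XX sB ^ i * XX nC ^ (m - i) * ((m.choose i : ℕ) : Al α)) =
      (m.choose i : ℚ) • ((XX sB ^ 0 * XX sB ^ i) * (XX sC ^ k * XX nC ^ (m - i))) := by
    rw [pow_zero, one_mul, ← mul_assoc, ← mul_assoc, (c2.symm.pow_pow k i).eq, mul_assoc (XX sB ^ i),
      ← (Nat.cast_commute _ _).eq, ← nsmul_eq_mul, Nat.cast_smul_eq_nsmul]
  rw [e3, MonoidAlgebra.coeff_smul_apply, smul_eq_mul]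
  congr 1
  have hsup1 : Sup (XX sB ^ 0 * XX sB ^ i) (Bel B) := Sup_blk _ _ B
    (fun τ h => (Finset.mem_filter.1 h).2) (fun τ h => (Finset.mem_filter.1 h).2) _ _
  have hsup2 : Sup (XX sC ^ k * XX nC ^ (m - i)) (Bel C) := Sup_blk _ _ C
    (fun τ h => (Finset.mem_filter.1 h).2) (fun τ h => (Finset.mem_filter.1 h).2) _ _
  rw [← mk'_mul, MonoidAlgebra.coeff_mul_mul_of_uniqueMul]
  · congr 1
    · rw [pow_zero, one_mul, NN, ← coeff_prj (blk B) (XX (sw α) ^ i) _ le_rfl, map_pow, prj_XX]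
    · rw [GG, ← coeff_prj (blk C) (XX (star p) ^ k * _) _ le_rfl, map_mul, map_pow, map_pow,
        prj_XX, prj_XX]
  · intro s t hs ht h
    rw [Finsupp.mem_support_iff] at hs ht
    exact Mo_unique B C hd _ _ _ _ (hsup1 s hs) ⟨hB, le_rfl⟩ (hsup2 t ht) ⟨hC, le_rfl⟩ h

end
end split

section cycles
variable {α : Type*} [DecidableEq α]

lemma formPerm_append (l1 : List α) : ∀ (x a : α) (l2 : List α),
    (x :: (l1 ++ a :: l2)).formPerm =
      (x :: (l1 ++ [a])).formPerm * (a :: l2).formPerm := by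
  induction l1 with
  | nil => intro x a l2; simp [List.formPerm_cons_cons]
  | cons y l1 ih =>
    intro x a l2
    simp only [List.cons_append]
    rw [List.formPerm_cons_cons, ih, List.formPerm_cons_cons, mul_assoc]

lemma formPerm_comm (l1 l2 : List α) (h : l1.Disjoint l2) :
    l1.formPerm * l2.formPerm = l2.formPerm * l1.formPerm := by
  apply Perm.Disjoint.commute
  intro x
  by_cases hx : x ∈ l1
  · exact Or.inr (List.formPerm_apply_of_notMem (h hx))
  · exact Or.inl (List.formPerm_apply_of_notMem hx)

lemma formPerm_rot (x a : α) (l1 : List α) (h : (x :: (l1 ++ [a])).Nodup) :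
    (x :: (l1 ++ [a])).formPerm = swap a x * (x :: l1).formPerm := by
  have h1 : (a :: x :: l1) ~r (x :: (l1 ++ [a])) := ⟨1, by simp⟩
  rw [← List.formPerm_eq_of_isRotated (h1.nodup_iff.2 h) h1, List.formPerm_cons_cons]

lemma formPerm_split (l1 : List α) (x a : α) (l2 : List α) (h : (x :: (l1 ++ a :: l2)).Nodup) :
    (x :: (l1 ++ a :: l2)).formPerm =
      swap a x * ((a :: l2).formPerm * (x :: l1).formPerm) := by
  have e : x :: (l1 ++ a :: l2) = (x :: l1) ++ a :: l2 := rfl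
  have h2 := h
  rw [e, List.nodup_append] at h2
  rw [formPerm_append, formPerm_rot, mul_assoc, formPerm_comm]
  · intro u hu hv
    exact h2.2.2 u hu u hv rfl
  · refine h.sublist ?_
    apply List.Sublist.cons_cons
    apply List.Sublist.append_left
    simp

lemma orb_formPerm (L : List α) (B : Set α) (h : ∀ x ∈ L, x ∈ B) : orb L.formPerm ≤ blk B := by
  rw [orb_le]
  intro u
  by_cases hu : u ∈ L
  · exact Or.inr ⟨h u hu, h _ (List.formPerm_apply_mem_of_mem hu)⟩
  · rw [List.formPerm_apply_of_notMem hu]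

end cycles
end Hur

namespace Hur

section gens
variable {α : Type*} [Fintype α] [DecidableEq α]

lemma GG_gen {p : α} {k m : ℕ} {σ : Perm α} {P : Setoid α} (h : GG p k m σ P ≠ 0) :
    Gen (k + m) σ P := Sup_gen p k m (mk' σ P) h

lemma NN_gen {m : ℕ} {σ : Perm α} {P : Setoid α} (h : NN m σ P ≠ 0) :
    Gen m σ P := Sup_gen_sw m (mk' σ P) h

lemma Gen_cyc {A : Finset α} {x : α} {L : List α} {m : ℕ} (hA : A.Nonempty)
    (h : Gen m (List.formPerm (x :: L)) (blk (A : Set α))) : 2 * A.card ≤ m + L.length + 2 := by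
  have h1 := rk_orb_formPerm L x 1
  rw [mul_one, orb_one, rk_bot] at h1
  have h2 := rk_blk' A hA
  have h3 := h.2
  omega

lemma Gen_cyc2 {A : Finset α} {x y : α} {L L' : List α} {m : ℕ} (hA : A.Nonempty)
    (h : Gen m (List.formPerm (x :: L) * List.formPerm (y :: L')) (blk (A : Set α))) :
    2 * A.card ≤ m + L.length + L'.length + 2 := by
  have h0 := rk_orb_formPerm L x (List.formPerm (y :: L'))
  have h1 := rk_orb_formPerm L' y 1
  rw [mul_one, orb_one, rk_bot] at h1
  have h2 := rk_blk' A hA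
  have h3 := h.2
  omega

lemma orb_formPerm_rel (a : α) (L : List α) (hn : (a :: L).Nodup) (u : α) (hu : u ∈ a :: L) :
    orb (List.formPerm (a :: L)) a u := by
  have key : ∀ n : ℕ, orb (List.formPerm (a :: L)) a ((List.formPerm (a :: L) ^ n) a) := by
    intro n
    induction n with
    | zero => exact Setoid.refl' _ _
    | succ n ih =>
      rw [pow_succ', Perm.mul_apply]
      exact Setoid.trans' _ ih (orb_rel _ _)
  obtain ⟨i, hi, rfl⟩ := List.getElem_of_mem hu
  have := key i
  rw [List.formPerm_pow_apply_head _ _ hn] at this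
  simpa only [Nat.mod_eq_of_lt hi] using this

lemma orb_le_mul_left (l l' : List α) (h : l.Disjoint l') :
    orb l.formPerm ≤ orb (l.formPerm * l'.formPerm) := by
  rw [orb_le]
  intro u
  by_cases hu : u ∈ l
  · have := orb_rel (l.formPerm * l'.formPerm) u
    rwa [Perm.mul_apply, List.formPerm_apply_of_notMem (h hu)] at this
  · rw [List.formPerm_apply_of_notMem hu]

lemma orb_le_mul_right (l l' : List α) (h : l.Disjoint l') :
    orb l'.formPerm ≤ orb (l.formPerm * l'.formPerm) := by
  rw [formPerm_comm l l' h]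
  exact orb_le_mul_left l' l h.symm

end gens

section classify
variable {α : Type*}

lemma sup_blk_of (A B C : Set α) (hd : Disjoint B C) (hA : B ∪ C = A) (a p : α) (ha : a ∈ B)
    (hp : p ∈ C) : lk a p ⊔ (blk B ⊔ blk C) = blk A := by
  subst hA
  apply le_antisymm
  · refine sup_le ?_ (sup_le ?_ ?_)
    · rw [lk_le]; exact Or.inr ⟨Or.inl ha, Or.inr hp⟩
    · rw [blk_le]; intro u hu v hv; exact Or.inr ⟨Or.inl hu, Or.inl hv⟩
    · rw [blk_le]; intro u hu v hv; exact Or.inr ⟨Or.inr hu, Or.inr hv⟩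
  · rw [blk_le]
    set R := lk a p ⊔ (blk B ⊔ blk C) with hR
    have hap : R a p := (le_sup_left : lk a p ≤ R) (lk_rel a p)
    have hB : ∀ u ∈ B, ∀ v ∈ B, R u v := fun u hu v hv =>
      ((le_sup_left : blk B ≤ _).trans le_sup_right : blk B ≤ R) (Or.inr ⟨hu, hv⟩)
    have hC : ∀ u ∈ C, ∀ v ∈ C, R u v := fun u hu v hv =>
      ((le_sup_right : blk C ≤ _).trans le_sup_right : blk C ≤ R) (Or.inr ⟨hu, hv⟩)
    have key : ∀ u ∈ B ∪ C, R u a := by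
      rintro u (hu | hu)
      · exact hB u hu a ha
      · exact Setoid.trans' _ (hC u hu p hp) (Setoid.symm' _ hap)
    intro u hu v hv
    exact Setoid.trans' _ (key u hu) (Setoid.symm' _ (key v hv))

lemma classify (A : Set α) (a p : α) (ha : a ∈ A) (hp : p ∈ A) (Q : Setoid α)
    (h : lk a p ⊔ Q = blk A) (hQ : Q ≠ blk A) :
    Q = blk {u | u ∈ A ∧ Q u a} ⊔ blk {u | u ∈ A ∧ ¬ Q u a} ∧ ∀ u ∈ A, ¬ Q u a → Q u p := by
  have hnap : ¬ Q a p := by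
    intro hap
    apply hQ
    rw [← h]
    exact (sup_eq_right.2 (lk_le.2 hap)).symm
  have hle : Q ≤ blk A := h ▸ le_sup_right
  have key : ∀ u ∈ A, ¬ Q u a → Q u p := by
    intro u hu hua
    have h1 : (Q ⊔ lk a p) u a := by
      rw [sup_comm, h]; exact Or.inr ⟨hu, ha⟩
    rw [sup_lk] at h1
    rcases h1 with h1 | h1 | h1
    · exact (hua h1).elim
    · exact (hua h1.1).elim
    · exact h1.1
  refine ⟨?_, key⟩
  apply le_antisymm
  · intro u v huv
    rcases hle huv with h1 | ⟨h1, h2⟩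
    · subst h1; exact Setoid.refl' _ _
    · by_cases hu : Q u a
      · exact (le_sup_left : blk {u | u ∈ A ∧ Q u a} ≤ _)
          (Or.inr ⟨⟨h1, hu⟩, ⟨h2, Setoid.trans' _ (Setoid.symm' _ huv) hu⟩⟩)
      · exact (le_sup_right : blk {u | u ∈ A ∧ ¬ Q u a} ≤ _)
          (Or.inr ⟨⟨h1, hu⟩, ⟨h2, fun hv => hu (Setoid.trans' _ huv hv)⟩⟩)
  · refine sup_le ?_ ?_
    · rw [blk_le]; rintro u ⟨_, hu⟩ v ⟨_, hv⟩
      exact Setoid.trans' _ hu (Setoid.symm' _ hv)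
    · rw [blk_le]; rintro u ⟨h1, hu⟩ v ⟨h2, hv⟩
      exact Setoid.trans' _ (key u h1 hu) (Setoid.symm' _ (key v h2 hv))

end classify

section recursion
open scoped Classical in
section
variable {α : Type*} [Fintype α] [DecidableEq α]

/-- reindexing of the sum over the partitions when the swap cuts the cycle -/
lemma sum_cut (A LB LC : Finset α) (a p : α) (ha : a ∈ LB) (hp : p ∈ LC) (hLB : LB ⊆ A)
    (hLC : LC ⊆ A) (hd : Disjoint LB LC) (f : Setoid α → ℚ) (h0 : f (blk (A : Set α)) = 0)
    (hfB : ∀ Q, f Q ≠ 0 → ∀ u ∈ LB, Q u a) (hfC : ∀ Q, f Q ≠ 0 → ∀ u ∈ LC, Q u p) :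
    ∑ Q ∈ (Finset.univ : Finset (Setoid α)).filter (fun Q => lk a p ⊔ Q = blk (A : Set α)), f Q =
      ∑ S ∈ (A \ (LB ∪ LC)).powerset,
        f (blk ((LB ∪ S : Finset α) : Set α) ⊔ blk ((A \ (LB ∪ S) : Finset α) : Set α)) := by
  have hdis : ∀ S : Finset α, Disjoint ((LB ∪ S : Finset α) : Set α)
      ((A \ (LB ∪ S) : Finset α) : Set α) := by
    intro S
    rw [Finset.disjoint_coe]
    exact Finset.disjoint_sdiff
  have hpa : ∀ S ∈ (A \ (LB ∪ LC)).powerset, p ∈ A \ (LB ∪ S) := by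
    intro S hS
    rw [Finset.mem_powerset] at hS
    rw [Finset.mem_sdiff, Finset.mem_union]
    refine ⟨hLC hp, ?_⟩
    rintro (h | h)
    · exact Finset.disjoint_left.1 hd h hp
    · have := hS h
      simp [hp] at this
  symm
  apply Finset.sum_of_injOn (fun S : Finset α =>
    blk ((LB ∪ S : Finset α) : Set α) ⊔ blk ((A \ (LB ∪ S) : Finset α) : Set α))
  · intro S hS T hT hST
    simp only at hST
    rw [Finset.mem_coe, Finset.mem_powerset] at hS hT
    have key : ∀ S T : Finset α, S ⊆ A \ (LB ∪ LC) → 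
      blk ((LB ∪ S : Finset α) : Set α) ⊔ blk ((A \ (LB ∪ S) : Finset α) : Set α) = 
      blk ((LB ∪ T : Finset α) : Set α) ⊔ blk ((A \ (LB ∪ T) : Finset α) : Set α) → S ⊆ T := by
      intro S T hS hST u hu
      have h1 : (blk ((LB ∪ S : Finset α) : Set α) ⊔ blk ((A \ (LB ∪ S) : Finset α) : Set α)) u a := by
        rw [blk_sup _ _ (hdis S)]
        right; left
        simp [hu, ha]
      rw [hST, blk_sup _ _ (hdis T)] at h1
      have h2 := hS hu
      simp only [Finset.mem_sdiff, Finset.mem_union, not_or] at h2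
      rcases h1 with h1 | h1 | h1
      · subst h1; exact (h2.2.1 ha).elim
      · have := h1.1
        simp only [Finset.coe_union, Set.mem_union, Finset.mem_coe] at this
        exact this.resolve_left h2.2.1
      · have := h1.2
        simp [ha] at this
    exact (key S T hS hST).antisymm (key T S hT hST.symm)
  · intro S hS
    have hS' := hS
    rw [Finset.mem_coe, Finset.mem_powerset] at hS
    rw [Finset.mem_coe, Finset.mem_filter]
    refine ⟨Finset.mem_univ _, ?_⟩
    apply sup_blk_of _ _ _ (hdis S) _ a p
    · simp [ha]
    · exact hpa S hS'
    · rw [← Finset.coe_union, Finset.union_sdiff_of_subset]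
      exact Finset.union_subset hLB (hS.trans Finset.sdiff_subset)
  · intro Q hQ hn
    rw [Finset.mem_filter] at hQ
    by_contra hne
    apply hn
    have hQA : Q ≠ blk (A : Set α) := by rintro rfl; exact hne h0
    obtain ⟨h1, h2⟩ := classify (A : Set α) a p (hLB ha) (hLC hp) Q hQ.2 hQA
    have hnap : ¬ Q a p := by
      intro hap
      apply hQA
      rw [← hQ.2]
      exact (sup_eq_right.2 (lk_le.2 hap)).symm
    refine ⟨(A.filter (fun u => Q u a)) \ LB, ?_, ?_⟩
    · rw [Finset.mem_coe, Finset.mem_powerset]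
      intro u hu
      simp only [Finset.mem_sdiff, Finset.mem_filter, Finset.mem_union, not_or] at hu ⊢
      refine ⟨hu.1.1, hu.2, fun hc => hnap ?_⟩
      exact Setoid.trans' _ (Setoid.symm' _ hu.1.2) (hfC Q hne u hc)
    · simp only
      have e : LB ∪ (A.filter (fun u => Q u a)) \ LB = A.filter (fun u => Q u a) := by
        rw [Finset.union_sdiff_of_subset]
        intro u hu
        rw [Finset.mem_filter]
        exact ⟨hLB hu, hfB Q hne u hu⟩
      rw [e]
      conv_rhs => rw [h1]
      congr 2
      · ext u; simp
      · ext u; simp +contextual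
  · intro S _; rfl

lemma sum_full (A : Finset α) (a p : α) (ha : a ∈ A) (hp : p ∈ A) (f : Setoid α → ℚ)
    (hf : ∀ Q, f Q ≠ 0 → Q a p) :
    ∑ Q ∈ (Finset.univ : Finset (Setoid α)).filter (fun Q => lk a p ⊔ Q = blk (A : Set α)), f Q =
      f (blk (A : Set α)) := by
  apply Finset.sum_eq_single_of_mem
  · rw [Finset.mem_filter]
    exact ⟨Finset.mem_univ _, sup_eq_right.2 (lk_le.2 (Or.inr ⟨ha, hp⟩))⟩
  · intro Q hQ hne
    rw [Finset.mem_filter] at hQ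
    by_contra h
    apply hne
    rw [← hQ.2]
    exact (sup_eq_right.2 (lk_le.2 (hf Q h))).symm

lemma sum_out (A : Finset α) (a p : α) (ha : a ∉ A) (hap : a ≠ p) (f : Setoid α → ℚ) :
    ∑ Q ∈ (Finset.univ : Finset (Setoid α)).filter (fun Q => lk a p ⊔ Q = blk (A : Set α)), f Q =
      0 := by
  apply Finset.sum_eq_zero
  intro Q hQ
  rw [Finset.mem_filter] at hQ
  have : lk a p ≤ blk (A : Set α) := hQ.2 ▸ le_sup_left
  rw [lk_le] at this
  rcases this with h | h
  · exact (hap h).elim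
  · exact (ha h.1).elim

lemma GG_succ (p : α) (k m : ℕ) (σ : Perm α) (P : Setoid α) : GG p (k + 1) m σ P =
    ∑ a ∈ Finset.univ.erase p,
      ∑ Q ∈ (Finset.univ : Finset (Setoid α)).filter (fun Q => lk a p ⊔ Q = P),
        GG p k m (swap a p * σ) Q := by
  rw [GG, pow_succ', mul_assoc, coeff_XX_mul, sum_star]
  apply Finset.sum_congr rfl
  intro a _
  rw [orb_swap, swap_inv]
  rfl

lemma GG_base (p : α) (m : ℕ) (L : List α) (A : Finset α) (hn : (p :: L).Nodup)
    (hL : ∀ x ∈ p :: L, x ∈ A) (E : ℕ) (hA : A.card = L.length + 1 + E)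
    (hm : m + 1 = L.length + 1 + 2 * E) :
    GG p 0 m (List.formPerm (p :: L)) (blk (A : Set α)) =
      m.factorial * E.factorial * gam (L.length + 1) E 0 := by
  rw [gam_zero]
  split_ifs with h
  · obtain ⟨h1, rfl⟩ := h
    have h2 : L = [] := List.length_eq_zero_iff.1 (by omega)
    subst h2
    have h3 : m = 0 := by simpa using hm
    subst h3
    have h4 : A = {p} := by
      obtain ⟨x, rfl⟩ := Finset.card_eq_one.1 (by simpa using hA)
      have := hL p (by simp)
      simp at this
      rw [this]
    have h5 : blk (A : Set α) = ⊥ := by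
      rw [eq_bot_iff, blk_le, h4]
      intro u hu v hv
      simp at hu hv
      subst hu; subst hv; exact Setoid.refl' _ _
    rw [h5, GG, List.formPerm_singleton, ← one_eq, pow_zero, pow_zero, one_mul]
    simp [MonoidAlgebra.one_def]
  · rw [mul_zero]
    by_contra hne
    have := Sup_blk (non p) (non p) ({p}ᶜ : Set α) ?_ ?_ 0 m (mk' (List.formPerm (p :: L)) (blk (A : Set α))) ?_
    · have h2 := this.2
      rw [mk'_prt, blk_le] at h2
      have h3 : A = {p} := by
        ext u
        rw [Finset.mem_singleton]
        constructor
        · intro hu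
          rcases h2 p (hL p (by simp)) u hu with h3 | h3
          · exact h3.symm
          · exact (h3.1 rfl).elim
        · rintro rfl; exact hL u (by simp)
      rw [h3, Finset.card_singleton] at hA
      omega
    · intro τ hτ
      rw [orb_le]
      intro u
      have h1 := (mem_non.1 hτ).2
      by_cases hu : u = p
      · subst hu; rw [h1]
      · refine Or.inr ⟨hu, fun h2 => hu ?_⟩
        apply τ.injective
        rw [h1]; exact h2
    · intro τ hτ
      rw [orb_le]
      intro u
      have h1 := (mem_non.1 hτ).2
      by_cases hu : u = p
      · subst hu; rw [h1]
      · refine Or.inr ⟨hu, fun h2 => hu ?_⟩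
        apply τ.injective
        rw [h1]; exact h2
    · exact hne

end
end recursion
end Hur

namespace Hur

open scoped Classical in
section
variable {α : Type*} [Fintype α] [DecidableEq α]

/-- the formula for `GG` with `k` star transpositions -/
def GF (p : α) (k N : ℕ) : Prop := ∀ (A : Finset α) (L : List α) (E m : ℕ), A.card ≤ N →
  (p :: L).Nodup → (∀ x ∈ p :: L, x ∈ A) → A.card = L.length + 1 + E →
  k + m + 1 = L.length + 1 + 2 * E →
  GG p k m (List.formPerm (p :: L)) (blk (A : Set α)) =
      m.factorial * E.factorial * gam (L.length + 1) E k

/-- the formula for `NN` -/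
def NF (α : Type*) [Fintype α] [DecidableEq α] (N : ℕ) : Prop :=
  ∀ (A : Finset α) (x : α) (L : List α) (E m : ℕ), A.card < N →
  (x :: L).Nodup → (∀ y ∈ x :: L, y ∈ A) → A.card = L.length + 1 + E →
  m + 1 = L.length + 1 + 2 * E →
  NN m (List.formPerm (x :: L)) (blk (A : Set α)) =
      m.factorial * E.factorial * nuH (L.length + 1) E

lemma cut_term (p : α) (k N : ℕ) (hG : GF p k N) (hN : NF α N) (A B C : Finset α) (hAN : A.card ≤ N)
    (hd : Disjoint B C) (hBC : B ∪ C = A) (a : α) (L1 L2 : List α) (hn : (p :: (L1 ++ a :: L2)).Nodup)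
    (hB : ∀ x ∈ a :: L2, x ∈ B) (hC : ∀ x ∈ p :: L1, x ∈ C) (s t m : ℕ)
    (hs : B.card = L2.length + 1 + s) (ht : C.card = L1.length + 1 + t)
    (hm : k + m + 2 = L1.length + 1 + (L2.length + 1) + 2 * (s + t)) :
    GG p k m (List.formPerm (a :: L2) * List.formPerm (p :: L1)) (blk (B : Set α) ⊔ blk (C : Set α)) =
      m.factorial * (s.factorial * t.factorial) *
        (nuH (L2.length + 1) s * gam (L1.length + 1) t k) := by
  have hn2 : (p :: L1).Nodup := hn.sublist (by
    apply List.Sublist.cons_cons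
    exact List.sublist_append_left _ _)
  have hn3 : (a :: L2).Nodup := hn.sublist (by
    apply List.Sublist.cons
    exact List.sublist_append_right _ _)
  have hcard : A.card = B.card + C.card := by rw [← hBC, Finset.card_union_of_disjoint hd]
  have hBne : B.Nonempty := ⟨a, hB a (by simp)⟩
  have hCne : C.Nonempty := ⟨p, hC p (by simp)⟩
  rw [split_lemma (B : Set α) (C : Set α) (Finset.disjoint_coe.2 hd) p (hC p (by simp)) _ _
    (orb_formPerm _ _ hB) (orb_formPerm _ _ hC)]
  by_cases hi : L2.length + 2 * s ≤ m
  · rw [Finset.sum_eq_single_of_mem (L2.length + 2 * s) (by rw [Finset.mem_range]; omega)]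
    · rw [hN B a L2 s _ (by have := hCne.card_pos; omega) hn3 hB hs (by omega),
        hG C L1 t _ (by omega) hn2 hC ht (by omega)]
      have := Nat.choose_mul_factorial_mul_factorial hi
      have h2 : (m.choose (L2.length + 2 * s) : ℚ) * ((L2.length + 2 * s).factorial : ℚ) *
        ((m - (L2.length + 2 * s)).factorial : ℚ) = m.factorial := by exact_mod_cast this
      rw [← h2]; ring
    · intro i hi' hne
      rw [Finset.mem_range] at hi'
      by_contra h
      have h1 : NN i (List.formPerm (a :: L2)) (blk (B : Set α)) ≠ 0 := fun h0 => h (by rw [h0]; ring)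
      have h2 : GG p k (m - i) (List.formPerm (p :: L1)) (blk (C : Set α)) ≠ 0 :=
        fun h0 => h (by rw [h0]; ring)
      have h3 := Gen_cyc hBne (NN_gen h1)
      have h4 := Gen_cyc hCne (GG_gen h2)
      omega
  · rw [gam_vanish k _ _ (by omega), mul_zero, mul_zero]
    apply Finset.sum_eq_zero
    intro i hi'
    rw [Finset.mem_range] at hi'
    by_contra h
    have h1 : NN i (List.formPerm (a :: L2)) (blk (B : Set α)) ≠ 0 := fun h0 => h (by rw [h0]; ring)
    have h3 := Gen_cyc hBne (NN_gen h1)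
    omega

lemma cut_sum (p : α) (k N : ℕ) (hG : GF p k N) (hN : NF α N) (A : Finset α) (hAN : A.card ≤ N)
    (a : α) (L1 L2 : List α) (hn : (p :: (L1 ++ a :: L2)).Nodup)
    (hL : ∀ x ∈ p :: (L1 ++ a :: L2), x ∈ A) (E m : ℕ)
    (hA : A.card = L1.length + 1 + (L2.length + 1) + E)
    (hm : k + m + 2 = L1.length + 1 + (L2.length + 1) + 2 * E) :
    ∑ Q ∈ (Finset.univ : Finset (Setoid α)).filter (fun Q => lk a p ⊔ Q = blk (A : Set α)),
      GG p k m (swap a p * List.formPerm (p :: (L1 ++ a :: L2))) Q =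
      m.factorial * E.factorial * ∑ j ∈ Finset.HasAntidiagonal.antidiagonal E,
        nuH (L2.length + 1) j.1 * gam (L1.length + 1) j.2 k := by
  have hn2 : (p :: L1).Nodup := hn.sublist (by
    apply List.Sublist.cons_cons
    exact List.sublist_append_left _ _)
  have hn3 : (a :: L2).Nodup := hn.sublist (by
    apply List.Sublist.cons
    exact List.sublist_append_right _ _)
  have hdl : (a :: L2).Disjoint (p :: L1) := by
    have h2 := hn
    rw [show p :: (L1 ++ a :: L2) = (p :: L1) ++ a :: L2 from rfl, List.nodup_append] at h2
    intro u hu hv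
    exact h2.2.2 u hv u hu rfl
  rw [formPerm_split _ _ _ _ hn, ← mul_assoc, swap_mul_self, one_mul]
  have hLB : (a :: L2).toFinset ⊆ A := by
    intro u hu
    rw [List.mem_toFinset] at hu
    apply hL
    simp only [List.mem_cons, List.mem_append] at hu ⊢
    tauto
  have hLC : (p :: L1).toFinset ⊆ A := by
    intro u hu
    rw [List.mem_toFinset] at hu
    apply hL
    simp only [List.mem_cons, List.mem_append] at hu ⊢
    tauto
  have hd : Disjoint (a :: L2).toFinset (p :: L1).toFinset := by
    rw [Finset.disjoint_left]
    intro u hu hv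
    rw [List.mem_toFinset] at hu hv
    exact hdl hu hv
  have hcB : (a :: L2).toFinset.card = L2.length + 1 := by
    rw [List.toFinset_card_of_nodup hn3]; simp
  have hcC : (p :: L1).toFinset.card = L1.length + 1 := by
    rw [List.toFinset_card_of_nodup hn2]; simp
  have hU : (A \ ((a :: L2).toFinset ∪ (p :: L1).toFinset)).card = E := by
    rw [Finset.card_sdiff_of_subset (Finset.union_subset hLB hLC), Finset.card_union_of_disjoint hd]
    omega
  rw [sum_cut A (a :: L2).toFinset (p :: L1).toFinset a p (by simp) (by simp) hLB hLC hd]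
  · have key : ∀ S ∈ (A \ ((a :: L2).toFinset ∪ (p :: L1).toFinset)).powerset,
        GG p k m (List.formPerm (a :: L2) * List.formPerm (p :: L1))
          (blk (((a :: L2).toFinset ∪ S : Finset α) : Set α) ⊔
            blk ((A \ ((a :: L2).toFinset ∪ S) : Finset α) : Set α)) =
        (fun s => (m.factorial * (s.factorial * (E - s).factorial) *
          (nuH (L2.length + 1) s * gam (L1.length + 1) (E - s) k) : ℚ)) S.card := by
      intro S hS
      rw [Finset.mem_powerset] at hS
      have hSE : S.card ≤ E := hU ▸ Finset.card_le_card hS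
      have hS2 : ∀ u ∈ S, u ∈ A ∧ u ∉ a :: L2 ∧ u ∉ p :: L1 := by
        intro u hu
        have := hS hu
        rw [Finset.mem_sdiff, Finset.mem_union, not_or, List.mem_toFinset, List.mem_toFinset] at this
        exact this
      have hBs : ((a :: L2).toFinset ∪ S).card = L2.length + 1 + S.card := by
        rw [Finset.card_union_of_disjoint, hcB]
        rw [Finset.disjoint_left]
        intro u hu hv
        exact (hS2 u hv).2.1 (List.mem_toFinset.1 hu)
      have hsub : (a :: L2).toFinset ∪ S ⊆ A :=
        Finset.union_subset hLB (fun u hu => (hS2 u hu).1)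
      apply cut_term p k N hG hN A _ _ hAN Finset.disjoint_sdiff
        (Finset.union_sdiff_of_subset hsub) a L1 L2 hn
      · intro x hx
        rw [Finset.mem_union, List.mem_toFinset]; exact Or.inl hx
      · intro x hx
        rw [Finset.mem_sdiff, Finset.mem_union, List.mem_toFinset]
        refine ⟨hLC (List.mem_toFinset.2 hx), ?_⟩
        rintro (h | h)
        · exact hdl h hx
        · exact (hS2 x h).2.2 hx
      · exact hBs
      · rw [Finset.card_sdiff_of_subset hsub, hBs]; omega
      · omega
    rw [Finset.sum_congr rfl key, Finset.sum_powerset_apply_card (fun s : ℕ => (m.factorial * (s.factorial * (E - s).factorial) *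
          (nuH (L2.length + 1) s * gam (L1.length + 1) (E - s) k) : ℚ)), hU,
      Finset.Nat.sum_antidiagonal_eq_sum_range_succ
        (fun i j => nuH (L2.length + 1) i * gam (L1.length + 1) j k), Finset.mul_sum]
    apply Finset.sum_congr rfl
    intro s hs
    rw [Finset.mem_range] at hs
    have := Nat.choose_mul_factorial_mul_factorial (show s ≤ E by omega)
    have h2 : (E.choose s : ℚ) * (s.factorial : ℚ) * ((E - s).factorial : ℚ) = E.factorial := by
      exact_mod_cast this
    rw [← h2, nsmul_eq_mul]; ring
  · by_contra h
    have h1 := Gen_cyc2 ⟨p, hLC (by simp)⟩ (GG_gen h)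
    omega
  · intro Q hQ u hu
    have h1 := (GG_gen hQ).1
    exact Setoid.symm' _ (h1 (orb_le_mul_left _ _ hdl (orb_formPerm_rel a L2 hn3 u (List.mem_toFinset.1 hu))))
  · intro Q hQ u hu
    have h1 := (GG_gen hQ).1
    exact Setoid.symm' _ (h1 (orb_le_mul_right _ _ hdl (orb_formPerm_rel p L1 hn2 u (List.mem_toFinset.1 hu))))

lemma join_sum (p : α) (k N : ℕ) (hG : GF p k N) (A : Finset α) (hAN : A.card ≤ N)
    (a : α) (L : List α) (hn : (p :: L).Nodup) (ha : a ∈ A) (haL : a ∉ p :: L)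
    (hL : ∀ x ∈ p :: L, x ∈ A) (E m : ℕ)
    (hA : A.card = L.length + 1 + (E + 1))
    (hm : k + m + 2 = L.length + 1 + 2 * (E + 1)) :
    ∑ Q ∈ (Finset.univ : Finset (Setoid α)).filter (fun Q => lk a p ⊔ Q = blk (A : Set α)),
      GG p k m (swap a p * List.formPerm (p :: L)) Q =
      m.factorial * E.factorial * gam (L.length + 2) E k := by
  have hn2 : (p :: (L ++ [a])).Nodup := by
    have h1 : (a :: p :: L) ~r (p :: (L ++ [a])) := ⟨1, by simp⟩
    rw [← h1.nodup_iff, List.nodup_cons]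
    exact ⟨haL, hn⟩
  rw [← formPerm_rot _ _ _ hn2, sum_full A a p ha (hL p (by simp))]
  · rw [hG A (L ++ [a]) E m hAN hn2 _ _ _]
    · simp
    · intro x hx
      simp only [List.mem_cons, List.mem_append, List.not_mem_nil, or_false] at hx hL
      rcases hx with h | h | h
      · exact hL x (Or.inl h)
      · exact hL x (Or.inr h)
      · rw [h]; exact ha
    · simp; omega
    · simp; omega
  · intro Q hQ
    exact Setoid.symm' _ ((GG_gen hQ).1 (orb_formPerm_rel p (L ++ [a]) hn2 a (by simp)))

end
end Hur

namespace Hur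

lemma anti_sum (l : ℕ) (W : ℕ → ℕ → ℚ) (h1 : W 0 (l + 1) = 0) (h2 : W (l + 1) 0 = 0) :
    ∑ i ∈ Finset.HasAntidiagonal.antidiagonal (l + 1), W i.1 i.2 =
      ∑ i ∈ Finset.range l, W (l - i) (i + 1) := by
  rw [← Finset.Nat.sum_antidiagonal_swap]
  simp only [Prod.fst_swap, Prod.snd_swap]
  rw [Finset.Nat.sum_antidiagonal_eq_sum_range_succ (fun i j => W j i), Finset.sum_range_succ,
    Finset.sum_range_succ']
  simp only [Nat.sub_self, Nat.sub_zero, h1, h2, add_zero]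
  apply Finset.sum_congr rfl
  intro i _
  rw [Nat.add_sub_add_right]

open scoped Classical in
section
variable {α : Type*} [Fintype α] [DecidableEq α]

lemma GF_zero (p : α) (N : ℕ) : GF p 0 N := by
  intro A L E m _ hn hL hA hm
  exact GG_base p m L A hn hL E hA (by omega)

lemma GF_succ (p : α) (k N : ℕ) (hG : GF p k N) (hN : NF α N) : GF p (k + 1) N := by
  intro A L E m hAN hn hL hA hm
  have hpL : p ∉ L := (List.nodup_cons.1 hn).1
  have hnL : L.Nodup := (List.nodup_cons.1 hn).2
  have hpA : p ∈ A := hL p (by simp)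
  have hLA : L.toFinset ⊆ A := fun u hu => hL u (by simp [List.mem_toFinset.1 hu])
  set U := A \ (p :: L).toFinset with hUdef
  have hU : U.card = E := by
    rw [hUdef, Finset.card_sdiff_of_subset, List.toFinset_card_of_nodup hn, List.length_cons]
    · omega
    · intro u hu; exact hL u (List.mem_toFinset.1 hu)
  rw [GG_succ, gam_succ]
  set T : α → ℚ := fun a => 
      ∑ Q ∈ (Finset.univ : Finset (Setoid α)).filter (fun Q => lk a p ⊔ Q = blk (A : Set α)),
        GG p k m (swap a p * List.formPerm (p :: L)) Q with hT
  have e1 : ∑ a ∈ Finset.univ.erase p, T a = ∑ a ∈ L.toFinset, T a + ∑ a ∈ U, T a := by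
    rw [← Finset.sum_union]
    · symm
      apply Finset.sum_subset
      · intro u hu
        rw [Finset.mem_erase]
        refine ⟨?_, Finset.mem_univ _⟩
        rintro rfl
        simp [hUdef, hpL] at hu
      · intro u hu hu2
        apply sum_out
        · intro huA
          apply hu2
          rw [Finset.mem_erase] at hu
          simp [hUdef, huA, hu.1]
          tauto
        · exact (Finset.mem_erase.1 hu).1
    · rw [Finset.disjoint_left]
      intro u hu hv
      rw [List.mem_toFinset] at hu
      simp [hUdef, hu] at hv
  rw [e1, mul_add]
  congr 1
  · rw [List.sum_toFinset _ hnL, ← Fin.sum_univ_fun_getElem,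
      anti_sum L.length (fun x y => ∑ j ∈ Finset.HasAntidiagonal.antidiagonal E,
        nuH x j.1 * gam y j.2 k)
        (Finset.sum_eq_zero fun j _ => by rw [nuH_zero, zero_mul])
        (Finset.sum_eq_zero fun j _ => by rw [gam_zero_left, mul_zero]),
      ← Fin.sum_univ_eq_sum_range (fun i => ∑ j ∈ Finset.HasAntidiagonal.antidiagonal E,
        nuH (L.length - i) j.1 * gam (i + 1) j.2 k), Finset.mul_sum]
    apply Finset.sum_congr rfl
    rintro ⟨i, hi⟩ _
    have hsplit : L.take i ++ L[i] :: L.drop (i + 1) = L := by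
      rw [List.cons_getElem_drop_succ, List.take_append_drop]
    have h1 : (L.take i).length = i := by rw [List.length_take]; omega
    have h2 : (L.drop (i + 1)).length + 1 = L.length - i := by rw [List.length_drop]; omega
    have := cut_sum p k N hG hN A hAN L[i] (L.take i) (L.drop (i + 1)) (by rw [hsplit]; exact hn)
      (by rw [hsplit]; exact hL) E m (by omega) (by omega)
    rw [hsplit, h1, h2] at this
    exact this
  · cases E with
    | zero =>
      rw [Finset.card_eq_zero] at hU
      simp [hU]
    | succ E =>
      rw [if_neg (by omega), Finset.sum_congr rfl (g := fun _ => 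
        (m.factorial * E.factorial * gam (L.length + 2) E k : ℚ)), Finset.sum_const, hU]
      · rw [nsmul_eq_mul, Nat.factorial_succ, Nat.add_sub_cancel]
        push_cast
        ring
      · intro a ha
        rw [hUdef, Finset.mem_sdiff, List.mem_toFinset] at ha
        exact join_sum p k N hG A hAN a L hn ha.1 ha.2 hL E m (by omega) (by omega)

lemma GF_all (N : ℕ) (hN : NF α N) (p : α) (k : ℕ) : GF p k N := by
  induction k with
  | zero => exact GF_zero p N
  | succ k ih => exact GF_succ p k N ih hN

lemma NF_all (N : ℕ) : NF α N := by
  induction N with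
  | zero => intro A x L E m h; omega
  | succ N ih =>
    intro A x L E m h hn hL hA hm
    have hG := GF_all N ih x
    rw [NN, XX_sw x, (comm_star_non x).add_pow, MonoidAlgebra.coeff_sum, Finsupp.finsetSum_apply,
      ← sum_gam, show L.length + 1 + 2 * E = m + 1 from hm.symm, Finset.mul_sum]
    apply Finset.sum_congr rfl
    intro k hk
    rw [Finset.mem_range] at hk
    have h1 : XX (star x) ^ k * XX (non x) ^ (m - k) * ((m.choose k : ℕ) : Al α) =
      (m.choose k : ℚ) • (XX (star x) ^ k * XX (non x) ^ (m - k)) := by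
      rw [← (Nat.cast_commute _ _).eq, ← nsmul_eq_mul, Nat.cast_smul_eq_nsmul]
    rw [h1, MonoidAlgebra.coeff_smul_apply, smul_eq_mul]
    have h2 := hG k A L E (m - k) (by omega) hn hL hA (by omega)
    rw [GG] at h2
    rw [h2]
    have h3 := Nat.choose_mul_factorial_mul_factorial (show k ≤ m by omega)
    have h4 : (m.choose k : ℚ) * (k.factorial : ℚ) * ((m - k).factorial : ℚ) = m.factorial := by
      exact_mod_cast h3
    have h5 : (k.factorial : ℚ) ≠ 0 := by exact_mod_cast k.factorial_ne_zero
    rw [← h4]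
    field_simp

end
end Hur

namespace Hur

lemma sum_pow_ofFn {R β : Type*} [Semiring R] [Fintype β] (c : β → R) (m : ℕ) :
    (∑ x : β, c x) ^ m = ∑ t : Fin m → β, (List.ofFn fun i => c (t i)).prod := by
  induction m with
  | zero => simp
  | succ m ih =>
    rw [pow_succ', ih, ← (Fin.consEquiv (fun _ : Fin (m + 1) => β)).sum_comp, Fintype.sum_prod_type,
      Finset.sum_mul_sum]
    apply Finset.sum_congr rfl
    intro x _
    apply Finset.sum_congr rfl
    intro t _
    rw [List.ofFn_succ, List.prod_cons]
    simp [Fin.consEquiv]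

open scoped Classical in
section
variable {α : Type*} [Fintype α] [DecidableEq α]

lemma prod_c (m : ℕ) : ∀ (t : Fin m → Perm α),
    (List.ofFn fun i => if (t i).IsSwap then (MonoidAlgebra.single (el (t i)) (1 : ℚ) : Al α) else 0).prod =
      if ∀ i, (t i).IsSwap then MonoidAlgebra.single (List.ofFn fun i => el (t i)).prod (1 : ℚ) else 0 := by
  induction m with
  | zero => intro t; simp [MonoidAlgebra.one_def]
  | succ m ih =>
    intro t
    rw [List.ofFn_succ, List.prod_cons, ih (fun i => t i.succ), List.ofFn_succ, List.prod_cons]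
    by_cases h0 : (t 0).IsSwap
    · by_cases h1 : ∀ i : Fin m, (t i.succ).IsSwap
      · rw [if_pos h0, if_pos h1, if_pos (fun i => Fin.cases h0 h1 i), MonoidAlgebra.single_mul_single,
          one_mul]
      · rw [if_neg h1, if_neg (fun h : ∀ i, (t i).IsSwap => h1 fun i => h i.succ), mul_zero]
    · rw [if_neg h0, if_neg (fun h : ∀ i, (t i).IsSwap => h0 (h 0)), zero_mul]

lemma NN_count (m : ℕ) (σ : Perm α) (P : Setoid α) : NN m σ P =
    ∑ t : Fin m → Perm α, if (∀ i, (t i).IsSwap) ∧ (List.ofFn fun i => el (t i)).prod = mk' σ P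
      then (1 : ℚ) else 0 := by
  have h : XX (sw α) = ∑ τ : Perm α, if τ.IsSwap then (MonoidAlgebra.single (el τ) (1 : ℚ) : Al α) else 0 := by
    rw [XX, sw, Finset.sum_filter]
  rw [NN, h, sum_pow_ofFn, MonoidAlgebra.coeff_sum, Finsupp.finsetSum_apply]
  apply Finset.sum_congr rfl
  intro t _
  rw [prod_c]
  by_cases h1 : ∀ i, (t i).IsSwap
  · rw [if_pos h1]
    simp only [h1, implies_true, true_and]
    rw [MonoidAlgebra.coeff_single, Finsupp.single_apply]
  · rw [if_neg h1, if_neg (fun h => h1 h.1)]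
    simp

lemma prod_el_fst (l : List (Perm α)) : (l.map el).prod.1 = l.prod := by
  induction l with
  | nil => rfl
  | cons a l ih => rw [List.map_cons, List.prod_cons, Prod.fst_mul, ih, List.prod_cons]; rfl

lemma prod_el_prt (l : List (Perm α)) (R : Setoid α) :
    (l.map el).prod.prt ≤ R ↔ ∀ τ ∈ l, orb τ ≤ R := by
  induction l with
  | nil => simp [one_prt]
  | cons a l ih => rw [List.map_cons, List.prod_cons, mul_prt, sup_le_iff, ih]; simp [el]

lemma trans_iff (σ : Perm α) (l : List (Perm α)) (h : σ * l.prod = 1) :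
    (∀ x y : α, ∃ g ∈ Subgroup.closure ({σ} ∪ {τ | τ ∈ l}), g x = y) ↔ (l.map el).prod.prt = ⊤ := by
  set P := (l.map el).prod.prt with hP
  have hl : ∀ τ ∈ l, orb τ ≤ P := (prod_el_prt l P).1 le_rfl
  have hprod : ∀ l' : List (Perm α), (∀ τ ∈ l', orb τ ≤ P) → orb l'.prod ≤ P := by
    intro l'
    induction l' with
    | nil => intro _; simp [orb_one]
    | cons a l' ih =>
      intro h
      rw [List.prod_cons]
      exact (orb_mul_le _ _).trans (sup_le (h a (by simp)) (ih fun τ hτ => h τ (by simp [hτ])))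
  have hσ : orb σ ≤ P := by
    rw [eq_inv_of_mul_eq_one_left h, orb_inv]
    exact hprod l hl
  constructor
  · intro ht
    rw [eq_top_iff]
    intro x y hxy
    clear hxy
    obtain ⟨g, hg, rfl⟩ := ht x y
    have : orb g ≤ P := by
      induction hg using Subgroup.closure_induction with
      | mem g hg =>
        rcases hg with hg | hg
        · rw [Set.mem_singleton_iff.1 hg]; exact hσ
        · exact hl g hg
      | one => simp [orb_one]
      | mul a b _ _ ha hb => exact (orb_mul_le _ _).trans (sup_le ha hb)
      | inv a _ ha => rw [orb_inv]; exact ha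
    exact this (orb_rel g x)
  · intro hT
    let H := Subgroup.closure ({σ} ∪ {τ | τ ∈ l})
    let R : Setoid α := ⟨fun u v => ∃ g ∈ H, g u = v, by
      refine ⟨fun u => ⟨1, H.one_mem, rfl⟩, ?_, ?_⟩
      · rintro u v ⟨g, hg, rfl⟩
        exact ⟨g⁻¹, H.inv_mem hg, by simp⟩
      · rintro u v w ⟨g, hg, rfl⟩ ⟨g', hg', rfl⟩
        exact ⟨g' * g, H.mul_mem hg' hg, rfl⟩⟩
    have h1 : P ≤ R := by
      rw [hP, prod_el_prt]
      intro τ hτ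
      rw [orb_le]
      intro u
      exact ⟨τ, Subgroup.subset_closure (Or.inr hτ), rfl⟩
    intro x y
    rw [hT] at h1
    exact h1 (show (⊤ : Setoid α) x y from trivial)

lemma cond_iff (m : ℕ) (σ : Perm α) (t : Fin m → Perm α) :
    (σ * (List.ofFn t).prod = 1 ∧
      (∀ x y : α, ∃ g ∈ Subgroup.closure ({σ} ∪ Set.range t), g x = y)) ↔
    (List.ofFn fun i => el (t i)).prod = mk' σ⁻¹ ⊤ := by
  have e1 : (List.ofFn fun i => el (t i)) = (List.ofFn t).map el := by
    rw [List.map_ofFn]; rfl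
  have e2 : Set.range t = {τ | τ ∈ List.ofFn t} := by
    ext τ; simp
  rw [e1, e2]
  constructor
  · rintro ⟨h1, h2⟩
    apply Mo_ext
    · rw [prod_el_fst, mk'_fst]
      exact (inv_eq_of_mul_eq_one_right h1).symm
    · rw [mk'_prt]
      exact (trans_iff σ _ h1).1 h2
  · intro h
    have h1 : σ * (List.ofFn t).prod = 1 := by
      rw [← prod_el_fst, h, mk'_fst, mul_inv_cancel]
    refine ⟨h1, (trans_iff σ _ h1).2 ?_⟩
    rw [h, mk'_prt]

lemma NN_four (σ : Perm α) (hσ : σ.cycleType = {4}) (n : ℕ) (hα : Fintype.card α = n) (hn : 4 ≤ n) :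
    NN (2 * n - 5) σ ⊤ = (2 * n - 5).factorial * (n - 4).factorial * nuH 4 (n - 4) := by
  have hc : σ.IsCycle := by
    rw [← Perm.card_cycleType_eq_one, hσ]; rfl
  have hs : σ.support.card = 4 := by
    rw [← Perm.sum_cycleType, hσ]; simp
  obtain ⟨x, hx⟩ : σ.support.Nonempty := by rw [← Finset.card_pos]; omega
  have h1 : List.formPerm (σ.toList x) = σ := by
    rw [Perm.formPerm_toList, hc.cycleOf_eq (Perm.mem_support.1 hx)]
  have h2 : (σ.toList x).length = 4 := by
    rw [Perm.length_toList, hc.cycleOf_eq (Perm.mem_support.1 hx), hs]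
  have h3 := Perm.nodup_toList σ x
  obtain ⟨y, L, hL⟩ : ∃ y L, σ.toList x = y :: L := by
    cases h : σ.toList x with
    | nil => rw [h] at h2; simp at h2
    | cons y L => exact ⟨y, L, rfl⟩
  rw [hL] at h1 h2 h3
  have h4 : (⊤ : Setoid α) = blk ((Finset.univ : Finset α) : Set α) := by
    symm
    rw [eq_top_iff]
    intro u v _
    exact Or.inr ⟨by simp, by simp⟩
  have h5 : L.length + 1 = 4 := by simpa using h2
  rw [h4, ← h1, NF_all (n + 1) Finset.univ y L (n - 4) (2 * n - 5) (by simp [hα]) h3 (by simp)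
    (by rw [Finset.card_univ, hα, h5]; omega) (by omega), h5]

lemma final (n : ℕ) (hn : 4 ≤ n) :
    (Nat.card {p : Perm (Fin n) × (Fin (2 * n - 5) → Perm (Fin n)) //
        p.1.cycleType = {4} ∧
        (∀ i, (p.2 i).IsSwap) ∧
        p.1 * (List.ofFn p.2).prod = 1 ∧
        (∀ x y : Fin n, ∃ g ∈ Subgroup.closure ({p.1} ∪ Set.range p.2),
          g x = y)} : ℚ) =
      (n.factorial : ℚ) * (32 / 3) *
        (((2 * n - 5).factorial : ℚ) / ((n - 4).factorial : ℚ)) *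
        (n : ℚ) ^ ((n : ℤ) - 6) := by
  rw [Nat.card_eq_fintype_card, Fintype.card_subtype, Finset.natCast_card_filter, Fintype.sum_prod_type]
  have key : ∀ σ : Perm (Fin n), (∑ t : Fin (2 * n - 5) → Perm (Fin n),
      if σ.cycleType = {4} ∧ (∀ i, (t i).IsSwap) ∧ σ * (List.ofFn t).prod = 1 ∧
        (∀ x y : Fin n, ∃ g ∈ Subgroup.closure ({σ} ∪ Set.range t), g x = y) then (1 : ℚ) else 0) =
      if σ.cycleType = {4} then
        ((2 * n - 5).factorial * (n - 4).factorial * nuH 4 (n - 4) : ℚ) else 0 := by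
    intro σ
    split_ifs with h
    · rw [← NN_four σ⁻¹ (by rw [Perm.cycleType_inv, h]) n (Fintype.card_fin n) hn, NN_count]
      apply Finset.sum_congr rfl
      intro t _
      have h7 := cond_iff (2 * n - 5) σ t
      have h8 : (σ.cycleType = {4} ∧ (∀ i, (t i).IsSwap) ∧ σ * (List.ofFn t).prod = 1 ∧
        (∀ x y : Fin n, ∃ g ∈ Subgroup.closure ({σ} ∪ Set.range t), g x = y)) ↔
        ((∀ i, (t i).IsSwap) ∧ (List.ofFn fun i => el (t i)).prod = mk' σ⁻¹ ⊤) := by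
        rw [← h7]
        exact ⟨fun h' => h'.2, fun h' => ⟨h, h'⟩⟩
      by_cases h9 : ((∀ i, (t i).IsSwap) ∧ (List.ofFn fun i => el (t i)).prod = mk' σ⁻¹ ⊤)
      · rw [if_pos h9, if_pos (h8.2 h9)]
      · rw [if_neg h9, if_neg (fun h' => h9 (h8.1 h'))]
    · apply Finset.sum_eq_zero
      intro t _
      rw [if_neg (fun h' => h h'.1)]
  rw [Finset.sum_congr rfl (fun σ _ => key σ), ← Finset.sum_filter, Finset.sum_const, nsmul_eq_mul]
  have hc := Equiv.Perm.card_of_cycleType_mul_eq (Fin n) {4}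
  have hc2 : ((Finset.univ.filter (fun g : Perm (Fin n) => g.cycleType = {4})).card : ℚ) *
      ((n - 4).factorial * 4) = n.factorial := by
    rw [if_pos (by simpa using hn)] at hc
    simp at hc
    exact_mod_cast hc
  have hf : ((n - 4).factorial : ℚ) ≠ 0 := by exact_mod_cast (n - 4).factorial_ne_zero
  rw [← hc2, nuH]
  have e1 : (((4 : ℕ) : ℚ) + ((n - 4 : ℕ) : ℚ)) = n := by
    rw [← Nat.cast_add]; congr 1; omega
  have e2 : (((n - 4 : ℕ) : ℤ) - 2) = (n : ℤ) - 6 := by omega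
  rw [e1, e2]
  have e3 : ((4 : ℕ).factorial : ℚ) = 24 := by norm_num [Nat.factorial]
  rw [e3]
  push_cast
  field_simp
  ring

end
end Hur

/-- Genus-zero Hurwitz number h_{3^1}: one branch point of cycle type (4,1^{n-4}) and 2n-5 transpositions; h_{3^1} = (32/3) * ((2n-5)!/(n-4)!) * n^(n-6). -/
theorem hurwitz_number_3_1 (n : ℕ) (hn : 4 ≤ n) :
    (Nat.card {p : Perm (Fin n) × (Fin (2 * n - 5) → Perm (Fin n)) //
        p.1.cycleType = {4} ∧
        (∀ i, (p.2 i).IsSwap) ∧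
        p.1 * (List.ofFn p.2).prod = 1 ∧
        (∀ x y : Fin n, ∃ g ∈ Subgroup.closure ({p.1} ∪ Set.range p.2),
          g x = y)} : ℚ) =
      (n.factorial : ℚ) * (32 / 3) *
        (((2 * n - 5).factorial : ℚ) / ((n - 4).factorial : ℚ)) *
        (n : ℚ) ^ ((n : ℤ) - 6) := by
  exact Hur.final n hn
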